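/- arXiv:1712.03145 — 2 statements merged into one kernel-verified Lean document; each statement's English description precedes it below -/
import Mathlib

section
/- Let r ≥ 2 be a fixed integer and let ε, K > 0 be constants. Let W ⊆ [n] be a fixed set of at most n/2 vertices, and let G ~ G(n,p) where p = p(n) ≥ n^{-1/r + ε}. Then with high probability, in every r-coloring of the edges of G, every subset Q ⊆ W of size at most K/p can be covered by 400 r^4 · log(4r^2) monochromatic cycles. -/
open MeasureTheory Filter

noncomputable def bernoulliM (q : ℝ) : Measure Bool :=
  ENNReal.ofReal q • Measure.dirac true + ENNReal.ofReal (1 - q) • Measure.dirac false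

noncomputable def gnp (n : ℕ) (q : ℝ) : Measure (Sym2 (Fin n) → Bool) :=
  Measure.pi fun _ => bernoulliM q

def graphOf {n : ℕ} (ω : Sym2 (Fin n) → Bool) : SimpleGraph (Fin n) :=
  SimpleGraph.fromRel (fun u v => ω s(u, v))

def IsMonoCycle {V ι : Type*} (G : SimpleGraph V) (c : Sym2 V → ι) (i : ι) (S : Set V) : Prop :=
  (∃ v, S = {v}) ∨
  (∃ u v, G.Adj u v ∧ c s(u, v) = i ∧ S = {u, v}) ∨
  (∃ (v : V) (w : G.Walk v v), w.IsCycle ∧ (∀ e ∈ w.edges, c e = i) ∧ S = {x | x ∈ w.support})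

/-!
Write `U` for the complement of `W`. With high probability `G(n, p)` is pseudorandom: any `r`
vertices have many common neighbours in `U`, any two disjoint sets of `m ≈ ν / p` vertices, where
`ν` is a small power of `n`, span an edge, and no nonempty set `X` of at most `m` vertices sends
many edges from each of its vertices into a set of at most `ν * |X|` vertices. All three follow from
a Chernoff bound and union bounds; the rest of the argument is deterministic.

For each colour link two vertices of `Q` if short walks of that colour through `U` join them
robustly. The union of these link graphs has independence number at most `4 * r`. Otherwise a large
independent set `T` comes with zones separating its vertices, and inside these zones one can grow,
from either half of `T`, a set of vertices reached in every colour from distinct roots: new vertices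
are common neighbours of `r` old ones with disjoint sets of roots, and the local sparsity of `G`
makes the set grow by a factor `ν` at each step. An edge between the two resulting sets of size `m`
completes a short walk of one colour between two vertices of `T`.

A graph of bounded independence number whose edges have `r` colours is covered by boundedly many
monochromatic cycles. Finally Haxell's theorem on disjoint representatives replaces the links of
such a cycle by disjoint paths through `U`, which turns it into a monochromatic cycle of `G`.
-/

section MonochromaticCycleCovers

open Finset
open scoped Classical

section Covers

variable {V : Type*} {P P' : Finset V → Prop} {A B : Finset V} {j k : ℕ}

/-- Coverings with a bounded number of pieces: at most `k` sets with property `P` cover `A`. The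
covering sets need not be contained in `A`. -/
def CoverableBy (P : Finset V → Prop) (k : ℕ) (A : Finset V) : Prop :=
  ∃ 𝒞 : Finset (Finset V), #𝒞 ≤ k ∧ (∀ S ∈ 𝒞, P S) ∧ ∀ x ∈ A, ∃ S ∈ 𝒞, x ∈ S

theorem coverableBy_empty : CoverableBy P k ∅ := ⟨∅, by simp⟩

theorem coverableBy_one (hA : P A) : CoverableBy P 1 A := ⟨{A}, by simpa using hA⟩

theorem CoverableBy.mono (h : CoverableBy P j A) (hB : B ⊆ A) (hjk : j ≤ k) :
    CoverableBy P k B :=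
  let ⟨𝒞, hcard, hP, hcov⟩ := h
  ⟨𝒞, hcard.trans hjk, hP, fun x hx => hcov x (hB hx)⟩

theorem CoverableBy.imp (h : CoverableBy P k A) (hP : ∀ S, P S → ∃ T, S ⊆ T ∧ P' T) :
    CoverableBy P' k A := by
  obtain ⟨𝒞, hcard, h𝒞, hcov⟩ := h
  choose! f hsub hf using hP
  refine ⟨𝒞.image f, card_image_le.trans hcard, by simpa using fun S hS => hf S (h𝒞 S hS), ?_⟩
  intro x hx
  obtain ⟨S, hS, hxS⟩ := hcov x hx
  exact ⟨f S, mem_image_of_mem f hS, hsub S (h𝒞 S hS) hxS⟩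

theorem CoverableBy.exists_subset_sUnion {P : Set V → Prop}
    (h : CoverableBy (fun S => P S) k A) :
    ∃ 𝒞 : Finset (Set V), #𝒞 ≤ k ∧ (∀ S ∈ 𝒞, P S) ∧ (A : Set V) ⊆ ⋃₀ (𝒞 : Set (Set V)) := by
  obtain ⟨𝒞, hcard, hP, hcov⟩ := h
  refine ⟨𝒞.image (↑), card_image_le.trans hcard, by simpa using hP, fun x hx => ?_⟩
  obtain ⟨S, hS, hxS⟩ := hcov x hx
  exact ⟨S, mem_coe.2 (mem_image_of_mem _ hS), hxS⟩

theorem CoverableBy.union (hA : CoverableBy P j A) (hB : CoverableBy P k B) :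
    CoverableBy P (j + k) (A ∪ B) := by
  obtain ⟨𝒞, h𝒞card, h𝒞, hcovA⟩ := hA
  obtain ⟨𝒟, h𝒟card, h𝒟, hcovB⟩ := hB
  refine ⟨𝒞 ∪ 𝒟, (card_union_le _ _).trans (by omega), fun S hS => ?_, fun x hx => ?_⟩
  · exact (mem_union.1 hS).elim (h𝒞 S) (h𝒟 S)
  · rcases mem_union.1 hx with hx | hx
    · exact (hcovA x hx).imp fun S hS => ⟨mem_union_left _ hS.1, hS.2⟩
    · exact (hcovB x hx).imp fun S hS => ⟨mem_union_right _ hS.1, hS.2⟩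

theorem CoverableBy.biUnion {ι : Type*} (s : Finset ι) {A : ι → Finset V}
    (h : ∀ i ∈ s, CoverableBy P k (A i)) : CoverableBy P (#s * k) (s.biUnion A) := by
  induction s using Finset.induction_on with
  | empty => exact coverableBy_empty
  | insert i s hi ih =>
    rw [biUnion_insert, card_insert_of_notMem hi, add_one_mul, add_comm]
    exact (h i (mem_insert_self i s)).union (ih fun j hj => h j (mem_insert_of_mem hj))

theorem exists_greedy_coverableBy {β : ℝ} (hβ : 1 ≤ β)
    (h : ∀ B ⊆ A, B.Nonempty → ∃ S ⊆ B, P S ∧ #B ≤ β * #S) (s : ℕ) :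
    ∃ B ⊆ A, CoverableBy P s (A \ B) ∧ (#B : ℝ) ≤ (1 - 1 / β) ^ s * #A := by
  have hβ0 : 0 < β := one_pos.trans_le hβ
  have hnonneg : 0 ≤ 1 - 1 / β := by rwa [sub_nonneg, div_le_one hβ0]
  induction s with
  | zero => exact ⟨A, Subset.rfl, by simpa using coverableBy_empty, by simp⟩
  | succ s ih =>
    obtain ⟨B, hBA, hcov, hcard⟩ := ih
    rcases B.eq_empty_or_nonempty with rfl | hB
    · refine ⟨∅, by simp, hcov.mono Subset.rfl s.le_succ, ?_⟩
      simpa using mul_nonneg (pow_nonneg hnonneg _) (Nat.cast_nonneg #A)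
    obtain ⟨S, hSB, hS, hBS⟩ := h B hBA hB
    refine ⟨B \ S, sdiff_subset.trans hBA, ?_, ?_⟩
    · refine (hcov.union (coverableBy_one hS)).mono (fun x => ?_) le_rfl
      simp only [Finset.mem_sdiff, mem_union]
      tauto
    · have hsplit : (#(B \ S) : ℝ) + #S = #B := mod_cast card_sdiff_add_card_eq_card hSB
      have hlarge : #B / β ≤ (#S : ℝ) := (div_le_iff₀' hβ0).2 hBS
      calc (#(B \ S) : ℝ) ≤ (1 - 1 / β) * #B := by linarith [one_div_mul_eq_div β (#B : ℝ)]
        _ ≤ (1 - 1 / β) * ((1 - 1 / β) ^ s * #A) := by gcongr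
        _ = (1 - 1 / β) ^ (s + 1) * #A := by ring

end Covers

section IndepSets

variable {V : Type*} {H : SimpleGraph V} {A I : Finset V}

theorem isIndepSet_insert {x : V} (hI : H.IsIndepSet I) (hx : ∀ y ∈ I, ¬ H.Adj x y) :
    H.IsIndepSet (insert x I : Finset V) := by
  rw [coe_insert]
  exact Set.Pairwise.insert hI fun y hy _ => ⟨hx y hy, fun hyx => hx y hy hyx.symm⟩

theorem exists_isIndepSet_of_degenerate {D : ℕ}
    (h : ∀ B ⊆ A, B.Nonempty → ∃ x ∈ B, #{y ∈ B | H.Adj x y} ≤ D) :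
    ∃ I ⊆ A, H.IsIndepSet I ∧ #A ≤ (D + 1) * #I := by
  induction A using Finset.strongInduction with
  | H A ih =>
    rcases A.eq_empty_or_nonempty with rfl | hA
    · exact ⟨∅, by simp⟩
    obtain ⟨x, hx, hdeg⟩ := h A Subset.rfl hA
    set N := {y ∈ A | H.Adj x y}
    set B := A \ insert x N with hB
    have hBA : B ⊆ A := sdiff_subset
    obtain ⟨I, hIB, hI, hcard⟩ := ih B
      ⟨hBA, fun hAB => by simpa [hB] using hAB hx⟩ fun C hC => h C (hC.trans hBA)
    have hxI : ∀ y ∈ I, x ≠ y ∧ ¬ H.Adj x y := fun y hy => by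
      have := hIB hy
      simp only [hB, N, Finset.mem_sdiff, mem_insert, mem_filter] at this
      tauto
    refine ⟨insert x I, insert_subset hx (hIB.trans hBA), ?_, ?_⟩
    · exact isIndepSet_insert hI fun y hy => (hxI y hy).2
    · rw [card_insert_of_notMem fun h => (hxI x h).1 rfl, mul_add_one]
      have hsplit : #A ≤ #B + #(insert x N) := by
        rw [hB]; exact card_le_card_sdiff_add_card
      have := card_insert_le x N
      omega

theorem sum_card_adj_le_of_degenerate {d : ℕ}
    (h : ∀ B ⊆ A, B.Nonempty → ∃ x ∈ B, #{y ∈ B | H.Adj x y} ≤ d) :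
    ∑ x ∈ A, #{y ∈ A | H.Adj x y} ≤ 2 * d * #A := by
  induction A using Finset.strongInduction with
  | H A ih =>
    rcases A.eq_empty_or_nonempty with rfl | hA
    · simp
    obtain ⟨x, hx, hdeg⟩ := h A Subset.rfl hA
    set B := A.erase x
    have hAB : A = insert x B := (insert_erase hx).symm
    have hxB : x ∉ B := notMem_erase x A
    have hB := ih B (erase_ssubset hx) fun C hC => h C (hC.trans (erase_subset _ _))
    have hsplit : ∀ y, #{z ∈ A | H.Adj y z} =
        #{z ∈ B | H.Adj y z} + if H.Adj x y then 1 else 0 := by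
      intro y
      rw [hAB, filter_insert]
      simp only [H.adj_comm y x]
      split_ifs
      · exact card_insert_of_notMem (by simp [hxB])
      · rfl
    have hdegB : #{z ∈ B | H.Adj x z} ≤ d := by simpa [hsplit x] using hdeg
    calc ∑ y ∈ A, #{z ∈ A | H.Adj y z}
        = 2 * #{z ∈ B | H.Adj x z} + ∑ y ∈ B, #{z ∈ B | H.Adj y z} := by
          simp only [hsplit]
          rw [hAB, sum_insert hxB, sum_add_distrib, ← card_filter]
          simp only [SimpleGraph.irrefl, if_false]
          ring
      _ ≤ 2 * d + 2 * d * #B := by gcongr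
      _ = 2 * d * #A := by rw [hAB, card_insert_of_notMem hxB]; ring

end IndepSets

section CycleSets

variable {V : Type*} {H : SimpleGraph V} {A S : Finset V}

/-- Degenerate cycles as vertex sets: `S` is a single vertex, or its elements can be listed as
`a, b, …, z` without repetition so that consecutive ones are adjacent in `H`, as are `z` and `a`.
The two ends of an edge qualify. -/
def IsCycleSet (H : SimpleGraph V) (S : Finset V) : Prop :=
  ∃ a t, (a :: t).Nodup ∧ S = (a :: t).toFinset ∧
    (t = [] ∨ (a :: (t ++ [a])).IsChain H.Adj)

theorem isCycleSet_singleton (v : V) : IsCycleSet H {v} := ⟨v, [], by simp⟩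

theorem exists_maximal_length_isChain_subset (hA : A.Nonempty) :
    ∃ v t, (v :: t).Nodup ∧ (v :: t).IsChain H.Adj ∧ (∀ x ∈ v :: t, x ∈ A) ∧
      ∀ w ∈ A, H.Adj v w → w ∈ t := by
  obtain ⟨a, ha⟩ := hA
  let IsPathLength (k : ℕ) : Prop :=
    ∃ l : List V, l.Nodup ∧ l.IsChain H.Adj ∧ (∀ x ∈ l, x ∈ A) ∧ l.length = k
  have hbound : ∀ k, IsPathLength k → k ≤ #A := by
    rintro k ⟨l, hl, -, hlA, rfl⟩
    rw [← List.toFinset_card_of_nodup hl]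
    exact card_le_card fun x hx => hlA x (List.mem_toFinset.1 hx)
  have hone : IsPathLength 1 := ⟨[a], by simpa using ha⟩
  obtain ⟨l, hl, hchain, hlA, hlen⟩ : IsPathLength (Nat.findGreatest IsPathLength #A) :=
    Nat.findGreatest_spec (hbound 1 hone) hone
  have hpos : 1 ≤ l.length := hlen ▸ Nat.le_findGreatest (hbound 1 hone) hone
  obtain ⟨v, t, rfl⟩ := List.exists_cons_of_length_pos hpos
  refine ⟨v, t, hl, hchain, hlA, fun w hw hvw => ?_⟩
  by_contra hwt
  have hlonger : IsPathLength ((v :: t).length + 1) :=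
    ⟨w :: v :: t, List.nodup_cons.2 ⟨by simp [hvw.ne', hwt], hl⟩, hchain.cons_cons hvw.symm,
      List.forall_mem_cons.2 ⟨hw, hlA⟩, rfl⟩
  have := Nat.le_findGreatest (hbound _ hlonger) hlonger
  omega

-- Close up a longest path in `A` at the last neighbour of its first vertex.
theorem exists_isCycleSet_of_adj_mem (hA : A.Nonempty) :
    ∃ v ∈ A, ∃ S ⊆ A, IsCycleSet H S ∧ v ∈ S ∧ ∀ w ∈ A, H.Adj v w → w ∈ S := by
  obtain ⟨v, t, hnodup, hchain, hsub, hnbr⟩ := exists_maximal_length_isChain_subset (H := H) hA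
  have hv : v ∈ A := hsub v List.mem_cons_self
  refine ⟨v, hv, ?_⟩
  rcases hlast : t.reverse.find? (H.Adj v ·) with _ | w
  · refine ⟨{v}, by simpa using hv, isCycleSet_singleton v, by simp, fun w hw hvw => ?_⟩
    exact absurd hvw (by simpa using List.find?_eq_none.1 hlast w (by simpa using hnbr w hw hvw))
  · obtain ⟨hvw, t₂, t₁, ht, hnot⟩ := List.find?_eq_some_iff_append.1 hlast
    obtain rfl : t = (t₁.reverse ++ [w]) ++ t₂.reverse := by simpa using congr_arg List.reverse ht
    rw [← List.cons_append] at hnodup hchain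
    refine ⟨(v :: (t₁.reverse ++ [w])).toFinset, fun x hx => hsub x ?_,
      ⟨v, _, hnodup.of_append_left, rfl, .inr ?_⟩, by simp, fun x hx hvx => ?_⟩
    · exact List.mem_append_left t₂.reverse (List.mem_toFinset.1 hx)
    · rw [← List.cons_append]
      refine hchain.left_of_append.append (List.isChain_singleton v) fun x hx y hy => ?_
      obtain rfl : w = x := by
        rwa [← List.cons_append, List.getLast?_concat, Option.mem_some_iff] at hx
      obtain rfl : v = y := by simpa using hy
      exact (of_decide_eq_true hvw).symm
    · have hxt₂ : x ∉ t₂ := fun h => by simpa [hvx] using hnot x h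
      exact List.mem_toFinset.2 (List.mem_cons_of_mem _ (by simpa [hxt₂] using hnbr x hx hvx))

variable {α k : ℕ}

theorem coverableBy_isCycleSet_of_isIndepSet_card_le
    (h : ∀ I ⊆ A, H.IsIndepSet I → #I ≤ k) :
    CoverableBy (fun S => IsCycleSet H S ∧ S ⊆ A) k A := by
  induction k generalizing A with
  | zero =>
    obtain rfl : A = ∅ := eq_empty_of_forall_notMem fun x hx => by
      simpa using h {x} (by simpa using hx) (by simp)
    exact coverableBy_empty
  | succ k ih =>
    rcases A.eq_empty_or_nonempty with rfl | hA
    · exact coverableBy_empty.mono Subset.rfl (k + 1).zero_le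
    obtain ⟨v, hv, S, hSA, hS, hvS, hnbr⟩ := exists_isCycleSet_of_adj_mem (H := H) hA
    have hrest : ∀ I ⊆ A \ S, H.IsIndepSet I → #I ≤ k := fun I hI hindep => by
      have hvI : v ∉ I := fun hvI => (Finset.mem_sdiff.1 (hI hvI)).2 hvS
      have := h (insert v I) (insert_subset hv (hI.trans sdiff_subset))
        (isIndepSet_insert hindep fun w hw hvw =>
          (Finset.mem_sdiff.1 (hI hw)).2 (hnbr w (sdiff_subset (hI hw)) hvw))
      rw [card_insert_of_notMem hvI] at this
      omega
    refine ((ih hrest).imp fun T hT => ⟨T, Subset.rfl, hT.1, hT.2.trans sdiff_subset⟩).union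
      (coverableBy_one ⟨hS, hSA⟩) |>.mono (fun x hx => ?_) le_rfl
    by_cases hxS : x ∈ S <;> simp [hx, hxS]

variable {κ : Type*} [Fintype κ] {H : κ → SimpleGraph V}

theorem exists_card_iSup_adj_le_of_degenerate {d : ℕ} (hA : A.Nonempty)
    (h : ∀ i, ∀ B ⊆ A, B.Nonempty → ∃ x ∈ B, #{y ∈ B | (H i).Adj x y} ≤ d) :
    ∃ x ∈ A, #{y ∈ A | (⨆ i, H i).Adj x y} ≤ 2 * Fintype.card κ * d := by
  refine exists_le_of_sum_le hA ?_
  calc ∑ x ∈ A, #{y ∈ A | (⨆ i, H i).Adj x y}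
      ≤ ∑ x ∈ A, ∑ i, #{y ∈ A | (H i).Adj x y} := sum_le_sum fun x _ => by
        refine (card_le_card fun y hy => ?_).trans card_biUnion_le
        simpa [SimpleGraph.iSup_adj] using hy
    _ = ∑ i, ∑ x ∈ A, #{y ∈ A | (H i).Adj x y} := sum_comm
    _ ≤ ∑ _i : κ, 2 * d * #A := sum_le_sum fun i _ => sum_card_adj_le_of_degenerate (h i)
    _ = ∑ _x ∈ A, 2 * Fintype.card κ * d := by
        simp only [sum_const, card_univ, smul_eq_mul]
        ring

theorem exists_isCycleSet_card_le [Nonempty κ] (hA : A.Nonempty)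
    (h : ∀ I ⊆ A, (⨆ i, H i).IsIndepSet I → #I ≤ α) :
    ∃ i, ∃ S ⊆ A, IsCycleSet (H i) S ∧ #A ≤ 2 * α * Fintype.card κ * #S := by
  let cycles : Finset (Finset V) := {S ∈ A.powerset | ∃ i, IsCycleSet (H i) S}
  have hmem : ∀ {S}, S ∈ cycles ↔ S ⊆ A ∧ ∃ i, IsCycleSet (H i) S := by simp [cycles]
  obtain ⟨a, ha⟩ := hA
  obtain ⟨S, hS, hmax⟩ := exists_max_image cycles card
    ⟨{a}, hmem.2 ⟨by simpa using ha, Classical.arbitrary κ, isCycleSet_singleton a⟩⟩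
  obtain ⟨hSA, i, hSi⟩ := hmem.1 hS
  have hpos : 0 < #S := by
    obtain ⟨b, t, -, rfl, -⟩ := hSi
    exact card_pos.2 ⟨b, by simp⟩
  have hdegenerate : ∀ i, ∀ B ⊆ A, B.Nonempty →
      ∃ x ∈ B, #{y ∈ B | (H i).Adj x y} ≤ #S - 1 := by
    intro i B hB hne
    obtain ⟨v, hv, T, hT, hcycle, hvT, hnbr⟩ := exists_isCycleSet_of_adj_mem (H := H i) hne
    refine ⟨v, hv, le_trans (card_le_card (t := T.erase v) fun y hy => ?_) ?_⟩
    · obtain ⟨hyB, hvy⟩ := mem_filter.1 hy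
      exact mem_erase.2 ⟨hvy.ne', hnbr y hyB hvy⟩
    · rw [card_erase_of_mem hvT]
      exact Nat.sub_le_sub_right (hmax T (hmem.2 ⟨hT.trans hB, i, hcycle⟩)) 1
  obtain ⟨I, hIA, hI, hAI⟩ := exists_isIndepSet_of_degenerate fun B hB hne =>
    exists_card_iSup_adj_le_of_degenerate hne fun i C hC => hdegenerate i C (hC.trans hB)
  have hκ : 0 < Fintype.card κ := Fintype.card_pos
  refine ⟨i, S, hSA, hSi, hAI.trans ?_⟩
  calc (2 * Fintype.card κ * (#S - 1) + 1) * #I ≤ (2 * Fintype.card κ * #S) * α := by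
        gcongr
        · obtain ⟨m, hm⟩ : ∃ m, #S = m + 1 := ⟨#S - 1, by omega⟩
          rw [hm, Nat.add_sub_cancel]
          nlinarith
        · exact h I hIA hI
    _ = 2 * α * Fintype.card κ * #S := by ring

end CycleSets

section MonochromaticCycles

variable {V ι : Type*} {G : SimpleGraph V} {c : Sym2 V → ι} {i : ι} {S : Finset V}

/-- The subgraph of `G` formed by the edges of colour `i`. -/
def colorClass (G : SimpleGraph V) (c : Sym2 V → ι) (i : ι) : SimpleGraph V where
  Adj u v := G.Adj u v ∧ c s(u, v) = i
  symm := ⟨fun u v h => ⟨h.1.symm, Sym2.eq_swap (a := u) ▸ h.2⟩⟩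

theorem le_iSup_colorClass (G : SimpleGraph V) (c : Sym2 V → ι) : G ≤ ⨆ i, colorClass G c i :=
  fun _ _ h => SimpleGraph.iSup_adj.2 ⟨_, h, rfl⟩

theorem IsCycleSet.isMonoCycle (h : IsCycleSet (colorClass G c i) S) : IsMonoCycle G c i S := by
  obtain ⟨a, t, hnodup, rfl, rfl | hchain⟩ := h
  · exact .inl ⟨a, by simp⟩
  rcases t with _ | ⟨b, _ | ⟨d, t⟩⟩
  · exact .inl ⟨a, by simp⟩
  · have hab : (colorClass G c i).Adj a b := by simpa using hchain.rel
    exact .inr (.inl ⟨a, b, hab.1, hab.2, by simp⟩)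
  · have hle : colorClass G c i ≤ G := fun _ _ huv => huv.1
    let w : (colorClass G c i).Walk a a :=
      (SimpleGraph.Walk.ofSupport _ (List.cons_ne_nil _ _) hchain).copy rfl (by simp)
    have hsupp : w.support = a :: (b :: d :: t ++ [a]) :=
      (SimpleGraph.Walk.support_copy ..).trans (SimpleGraph.Walk.support_ofSupport ..)
    have hlen : 3 ≤ w.length := by
      have := w.length_support
      grind
    have hcycle : w.IsCycle := by
      refine SimpleGraph.Walk.isCycle_iff_isPath_tail_and_le_length.2 ⟨.mk' ?_, hlen⟩
      have hnil : ¬ w.Nil := fun h => by simp [SimpleGraph.Walk.length_eq_zero_iff.2 h] at hlen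
      rw [w.support_tail_of_not_nil hnil, hsupp, List.tail_cons]
      exact List.nodup_append_comm.1 hnodup
    refine .inr (.inr ⟨a, w.mapLe hle, hcycle.mapLe hle, fun e he => ?_, ?_⟩)
    · rw [SimpleGraph.Walk.edges_mapLe_eq_edges] at he
      induction e using Sym2.ind with
      | h u v => exact (w.adj_of_mem_edges he).2
    · ext x
      rw [SimpleGraph.Walk.support_mapLe_eq_support, hsupp]
      simp only [List.coe_toFinset, Set.mem_ofPred_eq, List.mem_cons, List.mem_append]
      tauto

end MonochromaticCycles

section Subdivision

variable {V : Type*} {T : SimpleGraph V} {S : Finset V} {p : V → List V}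

theorem isChain_flatMap_cons {R : V → V → Prop} {σ : V → V} {a b : V} {t : List V}
    (hσ : (a :: t).map σ = t ++ [b])
    (hp : ∀ u ∈ a :: t, (u :: (p u ++ [σ u])).IsChain R) :
    ((a :: t).flatMap (fun u => u :: p u) ++ [b]).IsChain R := by
  induction t generalizing a with
  | nil =>
    obtain rfl : σ a = b := by simpa using hσ
    simpa using hp a
  | cons c t ih =>
    simp only [List.map_cons, List.cons_append, List.cons.injEq] at hσ
    obtain ⟨rfl, hσ⟩ := hσ
    have hrest := ih (by simpa using hσ) fun u hu => hp u (List.mem_cons_of_mem a hu)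
    have hfirst := hp a List.mem_cons_self
    simp only [List.flatMap_cons, List.cons_append, List.append_assoc] at hrest ⊢
    exact List.isChain_split (l₁ := a :: p a).2 ⟨hfirst, hrest⟩

theorem nodup_flatMap_cons {l : List V} (hl : l.Nodup) (hp : ∀ u ∈ l, (p u).Nodup)
    (hpl : ∀ u ∈ l, Disjoint (p u).toFinset l.toFinset)
    (hdisj : (l.toFinset : Set V).PairwiseDisjoint fun u => (p u).toFinset) :
    (l.flatMap fun u => u :: p u).Nodup := by
  have hnew : ∀ u ∈ l, ∀ v ∈ l, v ∉ p u := fun u hu v hv hvu =>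
    disjoint_left.1 (hpl u hu) (List.mem_toFinset.2 hvu) (List.mem_toFinset.2 hv)
  refine List.nodup_flatMap.2 ⟨fun u hu => List.nodup_cons.2 ⟨hnew u hu u hu, hp u hu⟩, ?_⟩
  refine List.Pairwise.imp_of_mem (fun {u v} hu hv huv => ?_) hl
  have huvp := List.disjoint_toFinset_iff_disjoint.1
    (hdisj (List.mem_toFinset.2 hu) (List.mem_toFinset.2 hv) huv)
  simp only [Function.onFun, List.disjoint_cons_left, List.disjoint_cons_right, List.mem_cons,
    not_or]
  exact ⟨⟨huv.symm, hnew u hu v hv⟩, hnew v hv u hu, huvp⟩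

-- `σ` moves each vertex of the cycle to the next one, and `p u` lists the new vertices between `u`
-- and `σ u`.
theorem IsCycleSet.exists_subdivision (h : IsCycleSet T S) :
    (∃ v, S = {v}) ∨ ∃ σ : Equiv.Perm V, (∀ u ∈ S, σ u ∈ S ∧ T.Adj u (σ u)) ∧
      ∀ (H : SimpleGraph V) (p : V → List V),
        (∀ u ∈ S, (u :: (p u ++ [σ u])).IsChain H.Adj) → (∀ u ∈ S, (p u).Nodup) →
        (∀ u ∈ S, Disjoint (p u).toFinset S) →
        (S : Set V).PairwiseDisjoint (fun u => (p u).toFinset) →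
        IsCycleSet H (S ∪ S.biUnion fun u => (p u).toFinset) := by
  obtain ⟨a, t, hnodup, rfl, rfl | hchain⟩ := h
  · exact .inl ⟨a, by simp⟩
  set l := a :: t
  have hσ : l.map l.formPerm = t ++ [a] := by
    have hrotate : t ++ [a] = l.rotate 1 := by simp [l]
    exact hrotate ▸ List.ext_getElem (by simp) fun i hi _ => by
      rw [List.getElem_map, List.formPerm_apply_getElem _ hnodup, List.getElem_rotate]
  refine .inr ⟨l.formPerm, fun u hu => ⟨?_, ?_⟩, fun H p hp hpnodup hpS hpdisj => ?_⟩
  · simpa only [List.mem_toFinset, List.formPerm_mem_iff_mem] using hu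
  · obtain ⟨i, hi, rfl⟩ := List.getElem_of_mem (List.mem_toFinset.1 hu)
    have hi' : i < (t ++ [a]).length := by simpa [l] using hi
    have hstep : T.Adj ((l ++ [a])[i]'(by grind)) (t ++ [a])[i] :=
      List.isChain_iff_getElem.1 hchain i (Nat.succ_lt_succ hi')
    simpa only [← hσ, List.getElem_map, List.getElem_append_left hi] using hstep
  · simp only [List.mem_toFinset] at hp hpnodup hpS
    refine ⟨a, p a ++ t.flatMap fun u => u :: p u, ?_, ?_, .inr ?_⟩
    · exact nodup_flatMap_cons hnodup hpnodup hpS hpdisj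
    · change _ = (l.flatMap fun u => u :: p u).toFinset
      ext x
      simp only [mem_union, mem_biUnion, List.mem_toFinset, List.mem_flatMap, List.mem_cons,
        and_or_left, exists_or, exists_eq_right']
    · simpa [l] using isChain_flatMap_cons hσ hp

end Subdivision

section CommonNeighbors

variable {V : Type*} {H : SimpleGraph V} {A B S : Finset V} {a q m : ℕ}

theorem sum_card_le_card_biUnion_add {ι : Type*} (I : Finset ι) (X : ι → Finset V)
    (h : ∀ i ∈ I, ∀ j ∈ I, i ≠ j → #(X i ∩ X j) ≤ m) :
    ∑ i ∈ I, #(X i) ≤ #(I.biUnion X) + (#I).choose 2 * m := by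
  induction I using Finset.induction_on with
  | empty => simp
  | insert i I hi ih =>
    have hI := ih fun j hj l hl => h j (mem_insert_of_mem hj) l (mem_insert_of_mem hl)
    have hinter : #(X i ∩ I.biUnion X) ≤ #I * m := by
      rw [inter_biUnion]
      exact card_biUnion_le_card_mul _ _ _ fun j hj => h i (mem_insert_self i I) j
        (mem_insert_of_mem hj) (ne_of_mem_of_not_mem hj hi).symm
    have hunion := card_union_add_card_inter (X i) (I.biUnion X)
    rw [sum_insert hi, biUnion_insert, card_insert_of_notMem hi, Nat.choose_succ_succ',
      Nat.choose_one_right, one_add_one_eq_two, add_mul]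
    omega

/-- The graph joining two vertices that have at least `m` common `H`-neighbours in `B`. -/
def commonNeighborGraph (H : SimpleGraph V) (B : Finset V) (m : ℕ) : SimpleGraph V where
  Adj v w := v ≠ w ∧ m ≤ #{x ∈ B | H.Adj v x ∧ H.Adj w x}
  symm := ⟨fun v w h => ⟨h.1.symm, by simpa only [and_comm] using h.2⟩⟩

theorem card_le_of_isIndepSet_commonNeighborGraph {I : Finset V} (ha : 0 < a) (hB : #B ≤ q)
    (hm : 0 < m) (hq : 8 * a ^ 2 * m ≤ q)
    (hdeg : ∀ v ∈ I, q ≤ 2 * a * #{w ∈ B | H.Adj v w})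
    (hI : (commonNeighborGraph H B m).IsIndepSet I) : #I ≤ 4 * a := by
  by_contra! hlarge
  obtain ⟨J, hJI, hJ⟩ := exists_subset_card_eq hlarge.le
  have hpairs := sum_card_le_card_biUnion_add J (fun v => {w ∈ B | H.Adj v w}) (m := m)
    fun v hv w hw hvw => by
      have := hI (hJI hv) (hJI hw) hvw
      simp only [commonNeighborGraph, not_and, not_le, filter_and] at this
      exact (this hvw).le
  have hunion : #(J.biUnion fun v => {w ∈ B | H.Adj v w}) ≤ q :=
    (card_le_card (biUnion_subset.2 fun v _ => filter_subset _ _)).trans hB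
  have hdegsum : 2 * q ≤ ∑ v ∈ J, #{w ∈ B | H.Adj v w} := by
    refine Nat.le_of_mul_le_mul_left ?_ (show 0 < 2 * a by positivity)
    calc 2 * a * (2 * q) = #J * q := by rw [hJ]; ring
      _ ≤ ∑ v ∈ J, 2 * a * #{w ∈ B | H.Adj v w} :=
        card_nsmul_le_sum J _ q fun v hv => hdeg v (hJI hv)
      _ = 2 * a * ∑ v ∈ J, #{w ∈ B | H.Adj v w} := (mul_sum ..).symm
  have hchoose : (4 * a).choose 2 < 8 * a ^ 2 := by
    rw [Nat.choose_two_right, Nat.div_lt_iff_lt_mul two_pos]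
    calc 4 * a * (4 * a - 1) < 4 * a * (4 * a) := by gcongr; omega
      _ = 8 * a ^ 2 * 2 := by ring
  have : (4 * a).choose 2 * m < 8 * a ^ 2 * m := by gcongr
  rw [hJ] at hpairs
  omega

-- Hall's theorem chooses the common neighbours to be inserted distinct.
theorem IsCycleSet.exists_superset_of_commonNeighborGraph
    (hS : IsCycleSet (commonNeighborGraph H B m) S) (hSB : Disjoint S B) (hm : #S ≤ m) :
    ∃ T, S ⊆ T ∧ IsCycleSet H T ∧ T ⊆ S ∪ B := by
  obtain ⟨v, rfl⟩ | ⟨σ, hσ, hsub⟩ := hS.exists_subdivision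
  · exact ⟨{v}, Subset.rfl, isCycleSet_singleton v, subset_union_left⟩
  obtain ⟨g, hginj, hg⟩ := (all_card_le_biUnion_card_iff_exists_injective
    fun u : S => {x ∈ B | H.Adj u x ∧ H.Adj (σ u) x}).1 fun X => by
      rcases X.eq_empty_or_nonempty with rfl | ⟨u, hu⟩
      · simp
      calc #X ≤ #S := by simpa using card_le_univ X
        _ ≤ _ := hm.trans (hσ u u.2).2.2
        _ ≤ _ := card_le_card (subset_biUnion_of_mem
            (fun u : S => ({x ∈ B | H.Adj u x ∧ H.Adj (σ u) x} : Finset V)) hu)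
  simp only [mem_filter] at hg
  let p (u : V) : List V := if hu : u ∈ S then [g ⟨u, hu⟩] else []
  have hp : ∀ u (hu : u ∈ S), p u = [g ⟨u, hu⟩] := fun u hu => dif_pos hu
  refine ⟨_, subset_union_left, hsub H p (fun u hu => ?_) (fun u hu => ?_) (fun u hu => ?_)
    (fun u hu v hv huv => ?_), union_subset_union_right (biUnion_subset.2 fun u hu => ?_)⟩
  · simpa [hp u hu] using ⟨(hg ⟨u, hu⟩).2.1, (hg ⟨u, hu⟩).2.2.symm⟩
  · simp [hp u hu]
  · simpa [hp u hu] using disjoint_right.1 hSB (hg ⟨u, hu⟩).1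
  · have hne : g ⟨v, hv⟩ ≠ g ⟨u, hu⟩ := hginj.ne fun h => huv (congr_arg Subtype.val h).symm
    simpa [Function.onFun, hp u hu, hp v hv] using hne.symm
  · simpa [hp u hu] using (hg ⟨u, hu⟩).1

theorem coverableBy_isCycleSet_of_disjoint (ha : 0 < a) (hAB : Disjoint A B) (hB : #B ≤ q)
    (hA : 8 * a ^ 2 * #A ≤ q) (hdeg : ∀ v ∈ A, q ≤ 2 * a * #{w ∈ B | H.Adj v w}) :
    CoverableBy (fun S => IsCycleSet H S ∧ S ⊆ A ∪ B) (4 * a) A := by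
  have hcover :
      CoverableBy (fun S => IsCycleSet (commonNeighborGraph H B #A) S ∧ S ⊆ A) (4 * a) A :=
    coverableBy_isCycleSet_of_isIndepSet_card_le fun I hIA hI => by
      rcases I.eq_empty_or_nonempty with rfl | hne
      · simp
      exact card_le_of_isIndepSet_commonNeighborGraph ha hB (card_pos.2 (hne.mono hIA)) hA
        (fun v hv => hdeg v (hIA hv)) hI
  refine hcover.imp fun S ⟨hS, hSA⟩ => ?_
  obtain ⟨T, hST, hT, hTS⟩ := hS.exists_superset_of_commonNeighborGraph
    (disjoint_of_subset_left hSA hAB) (card_le_card hSA)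
  exact ⟨T, hST, hT, hTS.trans (union_subset_union_left hSA)⟩

end CommonNeighbors

section SmallIndependenceNumber

variable {V κ : Type*} [Fintype κ] {H : κ → SimpleGraph V} {A Q : Finset V} {α k : ℕ}

theorem card_le_of_isIndepSet_of_low_degree {U : SimpleGraph V} (hk : k < α)
    (h : ∀ I ⊆ Q, U.IsIndepSet I → #I ≤ k + 1) {I : Finset V}
    (hIQ : I ⊆ {v ∈ Q | α * (#{w ∈ Q | U.Adj v w} + 1) < #Q}) (hI : U.IsIndepSet I) : #I ≤ k := by
  by_contra! hlarge
  have hsub : I ⊆ Q := hIQ.trans (filter_subset _ _)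
  have hcard : #I = k + 1 := le_antisymm (h I hsub hI) hlarge
  have hclosed : #(I.biUnion fun v => insert v {w ∈ Q | U.Adj v w}) < #Q := by
    refine Nat.lt_of_mul_lt_mul_left (a := α) ?_
    calc α * #(I.biUnion fun v => insert v {w ∈ Q | U.Adj v w})
        ≤ α * ∑ v ∈ I, (#{w ∈ Q | U.Adj v w} + 1) := by
          gcongr
          exact card_biUnion_le.trans (sum_le_sum fun v _ => card_insert_le _ _)
      _ = ∑ v ∈ I, α * (#{w ∈ Q | U.Adj v w} + 1) := mul_sum ..
      _ < ∑ _v ∈ I, #Q := sum_lt_sum_of_nonempty (card_pos.1 (by omega))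
          fun v hv => (mem_filter.1 (hIQ hv)).2
      _ ≤ α * #Q := by rw [sum_const, smul_eq_mul, hcard]; gcongr; omega
  obtain ⟨y, hyQ, hy⟩ := exists_mem_notMem_of_card_lt_card hclosed
  simp only [mem_biUnion, mem_insert, mem_filter, hyQ, true_and, not_exists, not_and, not_or] at hy
  have hindep := isIndepSet_insert hI fun v hv hyv => (hy v hv).2 hyv.symm
  have := h (insert y I) (insert_subset hyQ hsub) hindep
  rw [card_insert_of_notMem fun hyI => (hy y hyI).1 rfl] at this
  omega

theorem exists_card_le_mul_card_adj [Nonempty κ] {v : V} (hvA : v ∈ A)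
    (hA : 2 * α * #A ≤ #Q) (hv : #Q ≤ α * (#{w ∈ Q | (⨆ i, H i).Adj v w} + 1)) :
    ∃ i, #Q ≤ 2 * (α * Fintype.card κ) * #{w ∈ Q \ A | (H i).Adj v w} := by
  by_contra! hsmall
  have hsum : 2 * α * ∑ i, #{w ∈ Q \ A | (H i).Adj v w} < #Q := by
    refine Nat.lt_of_mul_lt_mul_left (a := Fintype.card κ) ?_
    calc Fintype.card κ * (2 * α * ∑ i, #{w ∈ Q \ A | (H i).Adj v w})
        = ∑ i, 2 * (α * Fintype.card κ) * #{w ∈ Q \ A | (H i).Adj v w} := by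
          rw [← mul_sum]; ring
      _ < ∑ _i : κ, #Q := sum_lt_sum_of_nonempty univ_nonempty fun i _ => hsmall i
      _ = Fintype.card κ * #Q := by simp
  have hnbrs : #{w ∈ Q | (⨆ i, H i).Adj v w} + 1 ≤
      #A + ∑ i, #{w ∈ Q \ A | (H i).Adj v w} := by
    rw [← card_insert_of_notMem (a := v) (by simp)]
    calc _ ≤ #(A ∪ univ.biUnion fun i => {w ∈ Q \ A | (H i).Adj v w}) := by
          refine card_le_card fun w hw => ?_
          by_cases hwA : w ∈ A
          · exact mem_union_left _ hwA
          · have hwv : w ≠ v := fun h => hwA (h ▸ hvA)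
            simpa [hwA, hwv, SimpleGraph.iSup_adj] using hw
      _ ≤ _ := (card_union_le _ _).trans (Nat.add_le_add_left card_biUnion_le _)
  have := Nat.mul_le_mul_left α hnbrs
  nlinarith

theorem coverableBy_isCycleSet_of_high_degree [Nonempty κ] (hα : 0 < α) (hAQ : A ⊆ Q)
    (hA : 8 * (α * Fintype.card κ) ^ 2 * #A ≤ #Q)
    (hdeg : ∀ v ∈ A, #Q ≤ α * (#{w ∈ Q | (⨆ i, H i).Adj v w} + 1)) :
    CoverableBy (fun S => ∃ i, IsCycleSet (H i) S ∧ S ⊆ Q)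
      (Fintype.card κ * (4 * (α * Fintype.card κ))) A := by
  set r := Fintype.card κ
  have hαr : α ≤ α * r := Nat.le_mul_of_pos_right α Fintype.card_pos
  have hαA : 2 * α * #A ≤ #Q := by
    refine le_trans (Nat.mul_le_mul_right _ ?_) hA
    nlinarith
  let A' (i : κ) : Finset V := {v ∈ A | #Q ≤ 2 * (α * r) * #{w ∈ Q \ A | (H i).Adj v w}}
  have hcover : ∀ i ∈ univ, CoverableBy (fun S => ∃ i, IsCycleSet (H i) S ∧ S ⊆ Q)
      (4 * (α * r)) (A' i) := fun i _ => by
    have hA' : A' i ⊆ A := filter_subset _ _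
    refine (coverableBy_isCycleSet_of_disjoint (H := H i) (hα.trans_le hαr)
      (disjoint_of_subset_left hA' disjoint_sdiff) (card_le_card sdiff_subset)
      ((Nat.mul_le_mul_left _ (card_le_card hA')).trans hA)
      fun v hv => (mem_filter.1 hv).2).imp fun S hS => ⟨S, Subset.rfl, i, hS.1, ?_⟩
    exact hS.2.trans (union_subset (hA'.trans hAQ) sdiff_subset)
  refine (CoverableBy.biUnion univ hcover).mono (fun v hv => ?_) le_rfl
  obtain ⟨i, hi⟩ := exists_card_le_mul_card_adj hv hαA (hdeg v hv)
  exact mem_biUnion.2 ⟨i, mem_univ i, mem_filter.2 ⟨hv, hi⟩⟩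

theorem exists_small_remainder_coverableBy_isCycleSet [Nonempty κ] (hα : 0 < α) {s : ℕ}
    (hs : (1 - 1 / (2 * α * Fintype.card κ : ℝ)) ^ s * (8 * (α * Fintype.card κ) ^ 2) ≤ 1)
    (hI : ∀ I ⊆ A, (⨆ i, H i).IsIndepSet I → #I ≤ α) :
    ∃ B ⊆ A, CoverableBy (fun S => ∃ i, IsCycleSet (H i) S ∧ S ⊆ A) s (A \ B) ∧
      8 * (α * Fintype.card κ) ^ 2 * #B ≤ #A := by
  set r := Fintype.card κ
  have hβ : (1 : ℝ) ≤ 2 * α * r := by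
    have : 1 ≤ 2 * α * r := Nat.mul_pos (Nat.mul_pos two_pos hα) Fintype.card_pos
    exact_mod_cast this
  obtain ⟨B, hBA, hcov, hB⟩ := exists_greedy_coverableBy (A := A)
    (P := fun S => ∃ i, IsCycleSet (H i) S ∧ S ⊆ A) hβ (fun C hC hne => by
      obtain ⟨i, S, hSC, hS, hcard⟩ :=
        exists_isCycleSet_card_le hne fun I hI' => hI I (hI'.trans hC)
      exact ⟨S, hSC, ⟨i, hS, hSC.trans hC⟩, mod_cast hcard⟩) s
  refine ⟨B, hBA, hcov, ?_⟩
  have : (8 * (α * r : ℝ) ^ 2) * #B ≤ #A := by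
    calc (8 * (α * r : ℝ) ^ 2) * #B
        ≤ (8 * (α * r : ℝ) ^ 2) * ((1 - 1 / (2 * α * r : ℝ)) ^ s * #A) := by gcongr
      _ = (1 - 1 / (2 * α * r : ℝ)) ^ s * (8 * (α * r) ^ 2) * #A := by ring
      _ ≤ #A := mul_le_of_le_one_left (Nat.cast_nonneg _) hs
  exact_mod_cast this

-- The vertices of low degree contain only smaller independent sets; the others are almost covered
-- greedily, and what remains is so small that it can be absorbed.
theorem coverableBy_isCycleSet_iSup [Nonempty κ] (hα : 0 < α) {s : ℕ}
    (hs : (1 - 1 / (2 * α * Fintype.card κ : ℝ)) ^ s * (8 * (α * Fintype.card κ) ^ 2) ≤ 1)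
    (hk : k ≤ α) (hI : ∀ I ⊆ Q, (⨆ i, H i).IsIndepSet I → #I ≤ k) :
    CoverableBy (fun S => ∃ i, IsCycleSet (H i) S ∧ S ⊆ Q)
      (k * (s + 4 * (α * Fintype.card κ) * Fintype.card κ)) Q := by
  induction k generalizing Q with
  | zero =>
    obtain rfl : Q = ∅ := eq_empty_of_forall_notMem fun x hx => by
      simpa using hI {x} (by simpa using hx) (by simp)
    exact coverableBy_empty.mono Subset.rfl (Nat.zero_le _)
  | succ k ih =>
    set D := {v ∈ Q | α * (#{w ∈ Q | (⨆ i, H i).Adj v w} + 1) < #Q}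
    have hDQ : D ⊆ Q := filter_subset _ _
    have hD := ih (by omega) fun I hID => card_le_of_isIndepSet_of_low_degree hk hI hID
    obtain ⟨A, hAE, hE, hA⟩ := exists_small_remainder_coverableBy_isCycleSet (A := Q \ D) hα hs
      fun I hIE hI' => (hI I (hIE.trans sdiff_subset) hI').trans hk
    have hAcov := coverableBy_isCycleSet_of_high_degree (H := H) hα (hAE.trans sdiff_subset)
      (hA.trans (card_le_card sdiff_subset)) fun v hv => by
        simpa [D, (Finset.mem_sdiff.1 (hAE hv)).1] using (Finset.mem_sdiff.1 (hAE hv)).2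
    have henlarge : ∀ {m B C}, B ⊆ Q →
        CoverableBy (fun S => ∃ i, IsCycleSet (H i) S ∧ S ⊆ B) m C →
        CoverableBy (fun S => ∃ i, IsCycleSet (H i) S ∧ S ⊆ Q) m C := fun hB h =>
      h.imp fun S ⟨i, hS, hSB⟩ => ⟨S, Subset.rfl, i, hS, hSB.trans hB⟩
    refine ((henlarge hDQ hD).union ((henlarge sdiff_subset hE).union hAcov)).mono
      (fun x hx => ?_) (by ring_nf; rfl)
    simp only [mem_union, Finset.mem_sdiff]
    tauto

end SmallIndependenceNumber

section Haxell

variable {V ι : Type*} {P : ι → Finset V → Prop} {S : Finset ι} {M M₁ M₂ : ι → Finset V}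
  {X Y e : Finset V} {i₀ o : ι} {N : ℕ}

/-- A system of disjoint representatives: for every `i ∈ S`, one of the sets `F` allowed by `P i`
is chosen, and the chosen sets are pairwise disjoint. -/
def IsDisjointSystem (P : ι → Finset V → Prop) (S : Finset ι) (M : ι → Finset V) : Prop :=
  (∀ i ∈ S, P i (M i)) ∧ (S : Set ι).PairwiseDisjoint M

/-- The indices in `S` whose set meets `X`. -/
noncomputable def blocked (S : Finset ι) (M : ι → Finset V) (X : Finset V) : Finset ι :=
  {i ∈ S | ¬ Disjoint (M i) X}

/-- `M` and `M'` coincide at every index of `S` at which one of them meets `X`. -/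
def AgreesOn (S : Finset ι) (X : Finset V) (M M' : ι → Finset V) : Prop :=
  ∀ i ∈ S, M i = M' i ∨ Disjoint (M i) X ∧ Disjoint (M' i) X

theorem mem_blocked {i : ι} : i ∈ blocked S M X ↔ i ∈ S ∧ ¬ Disjoint (M i) X := mem_filter

theorem blocked_subset : blocked S M X ⊆ S := filter_subset _ _

theorem AgreesOn.trans (h₁ : AgreesOn S X M M₁) (h₂ : AgreesOn S X M₁ M₂) :
    AgreesOn S X M M₂ := fun i hi => by
  rcases h₁ i hi with h | ⟨h, h'⟩ <;> rcases h₂ i hi with h₂ | h₂ <;> simp_all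

theorem AgreesOn.mono {S' : Finset ι} (h : AgreesOn S Y M M₁) (hS : S' ⊆ S) (hX : X ⊆ Y) :
    AgreesOn S' X M M₁ := fun i hi =>
  (h i (hS hi)).imp_right <| And.imp (disjoint_of_subset_right hX) (disjoint_of_subset_right hX)

theorem AgreesOn.blocked_eq (h : AgreesOn S X M M₁) : blocked S M X = blocked S M₁ X :=
  filter_congr fun i hi => by rcases h i hi with h | ⟨h, h'⟩ <;> simp [*]

theorem AgreesOn.of_erase {i : ι} (h : AgreesOn (S.erase i) X M M₁) (hM : Disjoint (M i) X)
    (hM₁ : Disjoint (M₁ i) X) : AgreesOn S X M M₁ := fun j hj => by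
  rcases eq_or_ne j i with rfl | hji
  · exact .inr ⟨hM, hM₁⟩
  · exact h j (mem_erase.2 ⟨hji, hj⟩)

theorem blocked_ssubset_of_agreesOn_erase {i : ι} (hi : i ∈ blocked S M X)
    (hM₁ : Disjoint (M₁ i) X) (h : AgreesOn (S.erase i) X M M₁) :
    blocked S M₁ X ⊂ blocked S M X := by
  refine ⟨fun j hj => ?_, fun hsub => (mem_blocked.1 (hsub hi)).2 hM₁⟩
  obtain ⟨hjS, hj⟩ := mem_blocked.1 hj
  have hji : j ≠ i := fun h => hj (h ▸ hM₁)
  have := (h j (mem_erase.2 ⟨hji, hjS⟩)).resolve_right fun h => hj h.2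
  exact mem_blocked.2 ⟨hjS, this ▸ hj⟩

theorem insert_blocked_subset {j : ι} (h : AgreesOn S X M M₁) (hj : j ∈ blocked S M₁ e) :
    insert j (blocked S M X) ⊆ blocked S M₁ (X ∪ e) := by
  rw [h.blocked_eq]
  refine insert_subset ?_ fun i hi => ?_
  · simp [mem_blocked, mem_blocked.1 hj]
  · simp [mem_blocked, mem_blocked.1 hi]

theorem IsDisjointSystem.update (hM : IsDisjointSystem P S M) (he : P o e)
    (hdisj : ∀ i ∈ S, Disjoint (M i) e) :
    IsDisjointSystem P (insert o S) (Function.update M o e) := by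
  refine ⟨fun i hi => ?_, fun i hi j hj hij => ?_⟩
  · rcases eq_or_ne i o with rfl | hio
    · simpa using he
    · simpa [hio] using hM.1 i (mem_of_mem_insert_of_ne hi hio)
  · rcases eq_or_ne i o with rfl | hio
    · simpa [Function.onFun, hij.symm] using
        (hdisj j (mem_of_mem_insert_of_ne hj hij.symm)).symm
    rcases eq_or_ne j o with rfl | hjo
    · simpa [Function.onFun, hij] using hdisj i (mem_of_mem_insert_of_ne hi hij)
    · simpa [Function.onFun, hio, hjo] using
        hM.2 (mem_of_mem_insert_of_ne hi hio) (mem_of_mem_insert_of_ne hj hjo) hij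

theorem exists_disjoint_of_card_le_mul_card_blocked (hcard : ∀ i F, P i F → #F ≤ N)
    (hP : ∀ I ⊆ insert i₀ S, I.Nonempty → ∀ Y : Finset V, #Y ≤ 2 * N * #I →
      ∃ i ∈ I, ∃ F, P i F ∧ Disjoint F Y)
    (hM : IsDisjointSystem P S M) (hX : #X ≤ N * #(blocked S M X)) :
    ∃ o ∈ insert i₀ (blocked S M X), ∃ e, P o e ∧ Disjoint e X ∧
      ∀ i ∈ blocked S M X, Disjoint e (M i) := by
  have hY : #(X ∪ (blocked S M X).biUnion M) ≤ 2 * N * #(insert i₀ (blocked S M X)) :=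
    calc #(X ∪ (blocked S M X).biUnion M)
        ≤ N * #(blocked S M X) + #(blocked S M X) * N := (card_union_le _ _).trans <|
          add_le_add hX <| card_biUnion_le_card_mul _ _ _ fun i hi =>
            hcard i _ (hM.1 i (blocked_subset hi))
      _ = 2 * N * #(blocked S M X) := by ring
      _ ≤ _ := by gcongr; exact subset_insert _ _
  simpa only [disjoint_union_right, disjoint_biUnion_right] using
    hP _ (insert_subset_insert i₀ blocked_subset) (insert_nonempty _ _) _ hY

-- The new set `e` may replace a representative as soon as no representative meets it. As long as
-- some do, `X ∪ e` has more blocked indices than `X`, and the induction unblocks one of them.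
theorem exists_isDisjointSystem_insert_or_unblock (hcard : ∀ i F, P i F → #F ≤ N)
    (hP : ∀ I ⊆ insert i₀ S, I.Nonempty → ∀ Y : Finset V, #Y ≤ 2 * N * #I →
      ∃ i ∈ I, ∃ F, P i F ∧ Disjoint F Y)
    (hM : IsDisjointSystem P S M) (hX : #X ≤ N * #(blocked S M X)) :
    (∃ F, IsDisjointSystem P (insert i₀ S) F) ∨ ∃ M', IsDisjointSystem P S M' ∧
      ∃ i ∈ blocked S M X, Disjoint (M' i) X ∧ AgreesOn (S.erase i) X M M' := by
  induction hd : #S - #(blocked S M X) using Nat.strong_induction_on generalizing M X with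
  | _ d ih =>
  obtain ⟨o, ho, e, hPe, heX, heM⟩ := exists_disjoint_of_card_le_mul_card_blocked hcard hP hM hX
  obtain ⟨M₁, ⟨hM₁, hag⟩, hmin⟩ := exists_minimalFor_of_wellFoundedLT
    (fun M₁ => IsDisjointSystem P S M₁ ∧ AgreesOn S X M M₁) (fun M₁ => #(blocked S M₁ e))
    ⟨M, hM, fun _ _ => .inl rfl⟩
  rcases (blocked S M₁ e).eq_empty_or_nonempty with hfree | ⟨j, hj⟩
  · have hupdate := hM₁.update hPe (by simpa [blocked, filter_eq_empty_iff] using hfree)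
    rcases mem_insert.1 ho with rfl | ho
    · exact .inl ⟨_, hupdate⟩
    rw [insert_eq_of_mem (blocked_subset ho)] at hupdate
    refine .inr ⟨_, hupdate, o, ho, by simpa using heX, fun i hi => ?_⟩
    simpa [(mem_erase.1 hi).1] using hag i (mem_of_mem_erase hi)
  obtain ⟨hjS, hje⟩ := mem_blocked.1 hj
  have hjX : j ∉ blocked S M X := fun h => by
    have := (hag j hjS).resolve_right fun h' => (mem_blocked.1 h).2 h'.1
    exact hje (this ▸ (heM j h).symm)
  have hlt := card_le_card (insert_blocked_subset hag hj)
  rw [card_insert_of_notMem hjX] at hlt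
  have hXe : #(X ∪ e) ≤ N * #(blocked S M₁ (X ∪ e)) :=
    calc #(X ∪ e) ≤ N * #(blocked S M X) + N :=
          (card_union_le _ _).trans (add_le_add hX (hcard o e hPe))
      _ ≤ _ := Nat.mul_le_mul_left N hlt
  have hle : #(blocked S M₁ (X ∪ e)) ≤ #S := card_le_card blocked_subset
  refine (ih _ (by omega) hM₁ hXe rfl).imp_right fun ⟨M₂, hM₂, i, hi, hi₂, hag₂⟩ => ?_
  obtain ⟨hiX, hie⟩ := disjoint_union_right.1 hi₂
  have hag₂X := hag₂.mono Subset.rfl (subset_union_left (s₁ := X))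
  refine ⟨M₂, hM₂, i, ?_, hiX, (hag.mono (erase_subset _ _) Subset.rfl).trans hag₂X⟩
  by_contra hiB
  obtain ⟨hiS, hiXe⟩ := mem_blocked.1 hi
  have hiX₁ : Disjoint (M₁ i) X := by simpa [hag.blocked_eq, mem_blocked, hiS] using hiB
  have hie₁ : i ∈ blocked S M₁ e := by simpa [mem_blocked, hiS, hiX₁] using hiXe
  have hlt₂ := card_lt_card <|
    blocked_ssubset_of_agreesOn_erase hie₁ hie (hag₂.mono Subset.rfl subset_union_right)
  exact hlt₂.not_ge (hmin ⟨hM₂, hag.trans (hag₂X.of_erase hiX₁ hiX)⟩ hlt₂.le)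

theorem exists_isDisjointSystem (hcard : ∀ i F, P i F → #F ≤ N)
    (hP : ∀ I ⊆ S, I.Nonempty → ∀ Y : Finset V, #Y ≤ 2 * N * #I →
      ∃ i ∈ I, ∃ F, P i F ∧ Disjoint F Y) :
    ∃ M, IsDisjointSystem P S M := by
  induction S using Finset.induction_on with
  | empty => exact ⟨fun _ => ∅, by simp [IsDisjointSystem]⟩
  | insert i₀ S _ ih =>
    obtain ⟨M, hM⟩ := ih fun I hI => hP I (hI.trans (subset_insert _ _))
    exact (exists_isDisjointSystem_insert_or_unblock hcard hP hM (X := ∅) (by simp)).resolve_right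
      fun ⟨_, _, i, hi, _⟩ => by simp [mem_blocked] at hi

end Haxell

section ShortWalks

variable {V : Type*} {H : SimpleGraph V} {X Y : Set V} {u v w : V} {k l N : ℕ}

/-- `v` can be reached from `u` by a walk of length at most `k` all of whose vertices, `u` and `v`
included, lie in `X`. -/
def ReachableWithin (H : SimpleGraph V) (X : Set V) (k : ℕ) (u v : V) : Prop :=
  ∃ p : H.Walk u v, p.length ≤ k ∧ ∀ x ∈ p.support, x ∈ X

theorem ReachableWithin.refl (hu : u ∈ X) : ReachableWithin H X k u u :=
  ⟨.nil, by simp, by simpa using hu⟩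

theorem ReachableWithin.mono (h : ReachableWithin H X k u v) (hX : X ⊆ Y) (hk : k ≤ l) :
    ReachableWithin H Y l u v :=
  let ⟨p, hp, hpX⟩ := h
  ⟨p, hp.trans hk, fun x hx => hX (hpX x hx)⟩

theorem ReachableWithin.symm (h : ReachableWithin H X k u v) : ReachableWithin H X k v u :=
  let ⟨p, hp, hpX⟩ := h
  ⟨p.reverse, by simpa using hp, by simpa using hpX⟩

theorem ReachableWithin.trans (h₁ : ReachableWithin H X k u v) (h₂ : ReachableWithin H X l v w) :
    ReachableWithin H X (k + l) u w :=
  let ⟨p, hp, hpX⟩ := h₁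
  let ⟨q, hq, hqX⟩ := h₂
  ⟨p.append q, by simpa using add_le_add hp hq, fun x hx =>
    ((SimpleGraph.Walk.mem_support_append_iff _ _).1 hx).elim (hpX x) (hqX x)⟩

theorem ReachableWithin.mem_right (h : ReachableWithin H X k u v) : v ∈ X :=
  let ⟨p, _, hpX⟩ := h
  hpX v p.end_mem_support

theorem ReachableWithin.tail (h : ReachableWithin H X k u v) (hvw : H.Adj v w) (hw : w ∈ X) :
    ReachableWithin H X (k + 1) u w :=
  h.trans ⟨hvw.toWalk, by simp, by simp [h.mem_right, hw]⟩

theorem ReachableWithin.exists_nodup_isChain (huv : u ≠ v)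
    (h : ReachableWithin H ({u, v} ∪ X) N u v) :
    ∃ p : List V, p.Nodup ∧ p.length ≤ N ∧ (∀ x ∈ p, x ∈ X) ∧
      (u :: (p ++ [v])).IsChain H.Adj := by
  obtain ⟨w, hw, hwX⟩ := h
  obtain ⟨q, hq, hqN, hqX⟩ : ∃ q : H.Walk u v, q.IsPath ∧ q.length ≤ N ∧
      ∀ x ∈ q.support, x ∈ {u, v} ∪ X :=
    ⟨w.bypass, w.bypass_isPath, w.length_bypass_le_length.trans hw, fun x hx =>
      hwX x (w.support_bypass_subset_support hx)⟩
  cases q with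
  | nil => exact absurd rfl huv
  | @cons _ y _ hadj q =>
    have hnodup := hq.support_nodup
    have hchain := (SimpleGraph.Walk.cons hadj q).isChain_adj_support
    rw [SimpleGraph.Walk.support_cons, ← q.dropLast_support_concat] at hnodup hchain hqX
    refine ⟨q.support.dropLast, by grind, ?_, fun x hx => ?_, hchain⟩
    · simpa using Nat.le_of_succ_le hqN
    · have hxuv : x ≠ u ∧ x ≠ v := by grind
      simpa [hxuv] using hqX x (List.mem_cons_of_mem u (List.mem_append_left [v] hx))

end ShortWalks

section Links

variable {V : Type*} {G H : SimpleGraph V} {S U Y : Finset V} {ℓ m ν N z : ℕ}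

/-- Every vertex outside `Y` has fewer than `ℓ` neighbours in `Y`. -/
def IsNeighborClosed (G : SimpleGraph V) (ℓ : ℕ) (Y : Finset V) : Prop :=
  ∀ v ∉ Y, #{y ∈ Y | G.Adj v y} < ℓ

/-- The graph joining two vertices that can be connected by short `H`-walks through `U`, robustly:
any neighbour-closed set of `G` missing both of them can be avoided. -/
def linkGraph (G : SimpleGraph V) (ℓ : ℕ) (H : SimpleGraph V) (U : Finset V) (N : ℕ) :
    SimpleGraph V where
  Adj u v := u ≠ v ∧ ∀ Y : Finset V, IsNeighborClosed G ℓ Y → u ∉ Y → v ∉ Y →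
    ReachableWithin H ({u, v} ∪ ↑(U \ Y)) N u v
  symm := ⟨fun u v h => ⟨h.1.symm, fun Y hY hv hu => by
    simpa only [Set.pair_comm] using (h.2 Y hY hu hv).symm⟩⟩

/-- No nonempty set `X` of at most `m` vertices sends `ℓ` edges from each of its vertices into a set
`Y` of at most `ν * #X` vertices. -/
def IsLocallySparse (G : SimpleGraph V) (m ν ℓ : ℕ) : Prop :=
  ∀ X Y : Finset V, X.Nonempty → #X ≤ m → #Y ≤ ν * #X → ∃ x ∈ X, #{y ∈ Y | G.Adj x y} < ℓ

theorem IsLocallySparse.exists_isNeighborClosed_union (hG : IsLocallySparse G m ν ℓ) (hz : 0 < z)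
    (hzm : z ≤ m) (hY : #Y + z ≤ ν * z) :
    ∃ Z : Finset V, #Z < z ∧ IsNeighborClosed G ℓ (Y ∪ Z) := by
  by_contra! hclosed
  have hgrow : ∀ k ≤ z, ∃ Z : Finset V, #Z = k ∧ ∀ x ∈ Z, ℓ ≤ #{y ∈ Y ∪ Z | G.Adj x y} := by
    intro k hk
    induction k with
    | zero => exact ⟨∅, by simp⟩
    | succ k ih =>
      obtain ⟨Z, rfl, hZ⟩ := ih (Nat.le_of_succ_le hk)
      obtain ⟨v, hv, hdeg⟩ : ∃ v ∉ Y ∪ Z, ℓ ≤ #{y ∈ Y ∪ Z | G.Adj v y} := by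
        simpa [IsNeighborClosed, and_assoc] using hclosed Z hk
      have hsub : Y ∪ Z ⊆ Y ∪ insert v Z := union_subset_union_right (subset_insert v Z)
      refine ⟨insert v Z, card_insert_of_notMem fun h => hv (mem_union_right Y h), fun x hx => ?_⟩
      refine le_trans ?_ (card_le_card (filter_subset_filter _ hsub))
      rcases mem_insert.1 hx with rfl | hx
      exacts [hdeg, hZ x hx]
  obtain ⟨Z, rfl, hZ⟩ := hgrow z le_rfl
  obtain ⟨x, hx, hlt⟩ := hG Z (Y ∪ Z) (card_pos.1 hz) hzm ((card_union_le _ _).trans hY)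
  exact (hZ x hx).not_gt hlt

theorem exists_notMem_apply_notMem {σ : Equiv.Perm V} {I Z : Finset V} (hZ : 2 * #Z < #I) :
    ∃ u ∈ I, u ∉ Z ∧ σ u ∉ Z := by
  have hcard : #(Z ∪ Z.map σ.symm.toEmbedding) < #I :=
    (card_union_le _ _).trans_lt (by rw [card_map]; omega)
  obtain ⟨u, hu, huZ⟩ := exists_mem_notMem_of_card_lt_card hcard
  simp only [mem_union, mem_map_equiv, Equiv.symm_symm, not_or] at huZ
  exact ⟨u, hu, huZ⟩

-- Haxell's theorem replaces the links by disjoint paths: the part of the forbidden set lying in `U`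
-- has a neighbour-closed superset that is too small to meet every link of `I`.
theorem exists_link_disjoint {σ : Equiv.Perm V} {I : Finset V} (hG : IsLocallySparse G m ν ℓ)
    (hν : 4 * N + 1 ≤ ν) (hσ : ∀ u ∈ I, (linkGraph G ℓ H U N).Adj u (σ u))
    (hU : ∀ u ∈ I, u ∉ U ∧ σ u ∉ U) (hI : I.Nonempty) (hm : #I ≤ m) (hY : #Y ≤ 2 * N * #I) :
    ∃ u ∈ I, ∃ p : List V, p.Nodup ∧ p.length ≤ N ∧ (u :: (p ++ [σ u])).IsChain H.Adj ∧
      p.toFinset ⊆ U ∧ Disjoint p.toFinset Y := by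
  have hIpos := hI.card_pos
  set z := (#I + 1) / 2
  have hYz : #(Y ∩ U) + z ≤ ν * z :=
    calc #(Y ∩ U) + z ≤ 2 * N * (2 * z) + z := by
          gcongr
          exact (card_le_card inter_subset_left).trans (hY.trans (by gcongr; omega))
      _ = (4 * N + 1) * z := by ring
      _ ≤ ν * z := by gcongr
  obtain ⟨Z, hZ, hclosed⟩ := hG.exists_isNeighborClosed_union (z := z) (by omega) (by omega) hYz
  obtain ⟨u, huI, huZ, hσuZ⟩ := exists_notMem_apply_notMem (σ := σ) (show 2 * #Z < #I by omega)
  obtain ⟨hne, hlink⟩ := hσ u huI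
  obtain ⟨p, hnodup, hlen, hp, hchain⟩ := (hlink _ hclosed (by simp [hU u huI, huZ])
    (by simp [hU u huI, hσuZ])).exists_nodup_isChain hne
  simp only [mem_coe, Finset.mem_sdiff, mem_union, mem_inter, not_or] at hp
  refine ⟨u, huI, p, hnodup, hlen, hchain, fun x hx => (hp x (List.mem_toFinset.1 hx)).1,
    disjoint_left.2 fun x hx hxY => ?_⟩
  have := hp x (List.mem_toFinset.1 hx)
  exact this.2.1 ⟨hxY, this.1⟩

theorem IsCycleSet.exists_superset_of_linkGraph (hS : IsCycleSet (linkGraph G ℓ H U N) S)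
    (hG : IsLocallySparse G m ν ℓ) (hν : 4 * N + 1 ≤ ν) (hSU : Disjoint S U) (hm : #S ≤ m) :
    ∃ T, S ⊆ T ∧ IsCycleSet H T := by
  obtain ⟨v, rfl⟩ | ⟨σ, hσ, hsub⟩ := hS.exists_subdivision
  · exact ⟨{v}, Subset.rfl, isCycleSet_singleton v⟩
  obtain ⟨F, hF, hdisj⟩ := exists_isDisjointSystem (S := S) (N := N)
    (P := fun u F => ∃ p : List V, p.Nodup ∧ p.length ≤ N ∧ (u :: (p ++ [σ u])).IsChain H.Adj ∧
      p.toFinset ⊆ U ∧ p.toFinset = F)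
    (fun u F ⟨p, _, hlen, _, _, hpF⟩ => hpF ▸ p.toFinset_card_le.trans hlen)
    (fun I hI hne Y hY => by
      obtain ⟨u, hu, p, hnodup, hlen, hchain, hpU, hpY⟩ := exists_link_disjoint hG hν
        (fun u hu => (hσ u (hI hu)).2) (fun u hu => ⟨disjoint_left.1 hSU (hI hu),
          disjoint_left.1 hSU (hσ u (hI hu)).1⟩) hne ((card_le_card hI).trans hm) hY
      exact ⟨u, hu, p.toFinset, ⟨p, hnodup, hlen, hchain, hpU, rfl⟩, hpY⟩)
  choose! p hnodup _ hchain hpU hpF using hF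
  refine ⟨_, subset_union_left, hsub H p hchain hnodup
    (fun u hu => (disjoint_of_subset_right (hpU u hu) hSU).symm) fun u hu v hv huv => ?_⟩
  simpa only [Function.onFun, hpF u hu, hpF v hv] using hdisj hu hv huv

end Links

section Independence

variable {V κ : Type*} {G : SimpleGraph V} {C : κ → SimpleGraph V}
  {Z : κ → V → Finset V} {I P T U X : Finset V} {b ℓ m ν J N k t : ℕ}

/-- Any `k` vertices have at least `L` common neighbours in `U`. -/
def HasCommonNeighbors (G : SimpleGraph V) (U : Finset V) (k L : ℕ) : Prop :=
  ∀ P : Finset V, #P = k → L ≤ #{u ∈ U | ∀ y ∈ P, G.Adj y u}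

/-- Any two disjoint sets of `m` vertices are joined by an edge. -/
def BipartiteHoleFree (G : SimpleGraph V) (m : ℕ) : Prop :=
  ∀ X Y : Finset V, #X = m → #Y = m → Disjoint X Y → ∃ x ∈ X, ∃ y ∈ Y, G.Adj x y

/-- Around each vertex `u ∈ T` and for each colour `c` a zone `Z c u` of vertices is given which
contains all but at most `b` of the neighbours in `U` of each of its vertices, and the zones of
distinct vertices of `T` do not contain short walks of colour `c` between these vertices. -/
structure IsSeparated (G : SimpleGraph V) (C : κ → SimpleGraph V) (U T : Finset V) (b N : ℕ)
    (Z : κ → V → Finset V) : Prop where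
  mem : ∀ u ∈ T, ∀ c, u ∈ Z c u
  card_le : ∀ u ∈ T, ∀ c, ∀ y ∈ Z c u, #{x ∈ U \ Z c u | G.Adj y x} ≤ b
  not_reachableWithin : ∀ u ∈ T, ∀ v ∈ T, u ≠ v → ∀ c,
    ¬ ReachableWithin (C c) (Z c u ∪ Z c v) N u v

/-- Each colour reaches `z` in at most `k` steps from a root in `I`, inside the zone of that root;
the roots of distinct colours are distinct. -/
def IsRainbowReachable (C : κ → SimpleGraph V) (Z : κ → V → Finset V) (I : Finset V) (k : ℕ)
    (z : V) : Prop :=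
  ∃ φ : κ → V, φ.Injective ∧ ∀ c, φ c ∈ I ∧ ReachableWithin (C c) (Z c (φ c)) k (φ c) z

theorem IsSeparated.eq_of_adj (h : IsSeparated G C U T b N Z) {u v x y : V} {c : κ} {l : ℕ}
    (hu : u ∈ T) (hv : v ∈ T) (hx : ReachableWithin (C c) (Z c u) k u x)
    (hy : ReachableWithin (C c) (Z c v) l v y) (hxy : (C c).Adj x y) (hN : k + 1 + l ≤ N) :
    u = v := by
  by_contra huv
  have hux := hx.mono (Y := Z c u ∪ Z c v) Set.subset_union_left le_rfl
  have hvy := hy.mono (Y := Z c u ∪ Z c v) Set.subset_union_right le_rfl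
  exact h.not_reachableWithin u hu v hv huv c
    (((hux.tail hxy hvy.mem_right).trans hvy.symm).mono le_rfl hN)

theorem exists_isSeparated_of_isIndepSet
    (hT : (⨆ c, linkGraph G ℓ (C c) U N).IsIndepSet (T : Set V)) (ht : #T ≤ t) :
    ∃ Z, IsSeparated G C U T (t * (2 * ℓ)) N Z := by
  have hobstacle : ∀ u ∈ T, ∀ v ∈ T, u ≠ v → ∀ c, ∃ Y : Finset V, IsNeighborClosed G ℓ Y ∧
      u ∉ Y ∧ v ∉ Y ∧ ¬ ReachableWithin (C c) ({u, v} ∪ ↑(U \ Y)) N u v := by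
    intro u hu v hv huv c
    by_contra! hY
    exact hT hu hv huv (SimpleGraph.iSup_adj.2 ⟨c, huv, hY⟩)
  choose! Y hY huY hvY hreach using hobstacle
  set B : κ → V → Finset V := fun c u => (T.erase u).biUnion fun v => Y u v c ∪ Y v u c
  have hBl : ∀ {c u v}, v ∈ T → u ≠ v → Y u v c ⊆ B c u := fun {c u v} hv huv =>
    subset_union_left.trans (subset_biUnion_of_mem (fun v => Y u v c ∪ Y v u c)
      (mem_erase.2 ⟨huv.symm, hv⟩))
  have hBr : ∀ {c u v}, v ∈ T → u ≠ v → Y v u c ⊆ B c u := fun {c u v} hv huv =>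
    subset_union_right.trans (subset_biUnion_of_mem (fun v => Y u v c ∪ Y v u c)
      (mem_erase.2 ⟨huv.symm, hv⟩))
  have huB : ∀ u ∈ T, ∀ c, u ∉ B c u := fun u hu c huB => by
    obtain ⟨v, hv, h⟩ := mem_biUnion.1 huB
    obtain ⟨hvu, hvT⟩ := mem_erase.1 hv
    exact (mem_union.1 h).elim (huY u hu v hvT hvu.symm c) (hvY v hvT u hu hvu c)
  refine ⟨fun c u => insert u (U \ B c u), fun u _ c => mem_insert_self _ _,
    fun u hu c y hy => ?_, fun u hu v hv huv c hr => ?_⟩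
  · have hyB : y ∉ B c u := by
      obtain rfl | hyU := mem_insert.1 hy
      exacts [huB _ hu c, (Finset.mem_sdiff.1 hyU).2]
    calc #{x ∈ U \ insert u (U \ B c u) | G.Adj y x} ≤ #{x ∈ B c u | G.Adj y x} :=
          card_le_card (filter_subset_filter _ fun x => by grind)
      _ ≤ #(T.erase u) * (2 * ℓ) := by
          rw [filter_biUnion]
          refine card_biUnion_le_card_mul _ _ _ fun v hv => ?_
          obtain ⟨hvu, hvT⟩ := mem_erase.1 hv
          have h₁ := hY u hu v hvT hvu.symm c y fun h => hyB (hBl hvT hvu.symm h)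
          have h₂ := hY v hvT u hu hvu c y fun h => hyB (hBr hvT hvu.symm h)
          rw [filter_union]
          exact (card_union_le _ _).trans (by omega)
      _ ≤ t * (2 * ℓ) := by gcongr; exact card_erase_le.trans ht
  · refine hreach u hu v hv huv c (hr.mono (fun x hx => ?_) le_rfl)
    have hxu := @hBl c u v hv huv x
    have hxv := @hBr c v u hu huv.symm x
    simp only [Set.mem_union, mem_coe, mem_insert, Finset.mem_sdiff, Set.mem_insert_iff,
      Set.mem_singleton_iff] at hx ⊢
    tauto

variable [Fintype κ]

theorem IsSeparated.exists_common_neighbors_subset (h : IsSeparated G C U T b N Z)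
    (hU : HasCommonNeighbors G U #P (#P * (Fintype.card κ * b) + ℓ)) {ρ : V → κ → V}
    (hρT : ∀ y ∈ P, ∀ c, ρ y c ∈ T) (hρ : ∀ y ∈ P, ∀ c, y ∈ Z c (ρ y c)) :
    ∃ S ⊆ U, ℓ ≤ #S ∧ ∀ z ∈ S, ∀ y ∈ P, G.Adj y z ∧ ∀ c, z ∈ Z c (ρ y c) := by
  set D := P.biUnion fun y => univ.biUnion fun c => {x ∈ U \ Z c (ρ y c) | G.Adj y x}
  have hD : #D ≤ #P * (Fintype.card κ * b) :=
    card_biUnion_le_card_mul _ _ _ fun y hy => card_biUnion_le_card_mul _ _ _ fun c _ =>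
      h.card_le _ (hρT y hy c) c y (hρ y hy c)
  refine ⟨{u ∈ U | ∀ y ∈ P, G.Adj y u} \ D, sdiff_subset.trans (filter_subset _ _), ?_, ?_⟩
  · have := hU P rfl
    have := le_card_sdiff D {u ∈ U | ∀ y ∈ P, G.Adj y u}
    omega
  · intro z hz y hy
    obtain ⟨hzC, hzD⟩ := Finset.mem_sdiff.1 hz
    obtain ⟨hzU, hadj⟩ := mem_filter.1 hzC
    refine ⟨hadj y hy, fun c => by_contra fun hzZ => hzD ?_⟩
    exact mem_biUnion.2 ⟨y, hy, mem_biUnion.2 ⟨c, mem_univ c, mem_filter.2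
      ⟨Finset.mem_sdiff.2 ⟨hzU, hzZ⟩, hadj y hy⟩⟩⟩

-- Two edges `y z`, `y' z` with `y, y' ∈ P` of the same colour would connect two vertices of `T`, so
-- all colours occur among the `r` edges from `z` to `P`.
theorem IsSeparated.exists_isRainbowReachable (h : IsSeparated G C U T b N Z)
    (hGC : G ≤ ⨆ c, C c) (hP : #P = Fintype.card κ)
    (hU : HasCommonNeighbors G U (Fintype.card κ) (Fintype.card κ * (Fintype.card κ * b) + ℓ))
    (hIT : I ⊆ T) (hk : 2 * k + 2 ≤ N) {ρ : V → κ → V}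
    (hρ : ∀ y ∈ P, ∀ c, ρ y c ∈ I ∧ ReachableWithin (C c) (Z c (ρ y c)) k (ρ y c) y)
    (hρne : ∀ y ∈ P, ∀ y' ∈ P, y ≠ y' → ∀ c c', ρ y c ≠ ρ y' c') :
    ∃ S ⊆ U, ℓ ≤ #S ∧ ∀ z ∈ S, (∀ y ∈ P, G.Adj y z) ∧ IsRainbowReachable C Z I (k + 1) z := by
  obtain ⟨S, hSU, hS, hSP⟩ := h.exists_common_neighbors_subset (P := P) (by rwa [hP])
    (fun y hy c => hIT (hρ y hy c).1) fun y hy c => (hρ y hy c).2.mem_right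
  refine ⟨S, hSU, hS, fun z hz => ⟨fun y hy => (hSP z hz y hy).1, ?_⟩⟩
  have hreach : ∀ y ∈ P, ∀ c, (C c).Adj y z →
      ReachableWithin (C c) (Z c (ρ y c)) (k + 1) (ρ y c) z := fun y hy c hyz =>
    (hρ y hy c).2.tail hyz ((hSP z hz y hy).2 c)
  have hcolor : ∀ y : P, ∃ c, (C c).Adj y z := fun y =>
    SimpleGraph.iSup_adj.1 (hGC (hSP z hz y y.2).1)
  choose g hg using hcolor
  have hginj : g.Injective := fun y y' hyy' => by
    by_contra hne
    refine hρne y y.2 y' y'.2 (Subtype.coe_ne_coe.2 hne) (g y) (g y) ?_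
    exact h.eq_of_adj (hIT (hρ y y.2 _).1) (hIT (hρ y' y'.2 _).1) (hρ y y.2 _).2
      (hreach y' y'.2 (g y) (hyy' ▸ hg y')) (hg y) (by omega)
  have hgsurj : g.Surjective :=
    ((Fintype.bijective_iff_injective_and_card g).2 ⟨hginj, by simp [hP]⟩).2
  obtain ⟨y, hy⟩ := hgsurj.hasRightInverse
  refine ⟨fun c => ρ (y c) c, fun c c' hcc' => ?_, fun c => ⟨(hρ _ (y c).2 c).1, ?_⟩⟩
  · by_contra hne
    exact hρne _ (y c).2 _ (y c').2 (Subtype.coe_ne_coe.2 (hy.injective.ne hne)) c c' hcc'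
  · exact hreach _ (y c).2 c (by simpa only [hy c] using hg (y c))

-- `z`, reached from its `r` roots, and the `r - 1` other vertices of `I`, each its own root, are
-- `r` vertices with disjoint sets of roots.
theorem IsSeparated.exists_neighbors_isRainbowReachable (h : IsSeparated G C U T b N Z)
    (hGC : G ≤ ⨆ c, C c) (hTU : Disjoint T U)
    (hU : HasCommonNeighbors G U (Fintype.card κ) (Fintype.card κ * (Fintype.card κ * b) + ℓ))
    (hIT : I ⊆ T) (hI : #I + 1 = 2 * Fintype.card κ) (hk : 2 * k + 2 ≤ N) {z : V}
    (hzU : z ∈ U) (hz : IsRainbowReachable C Z I k z) :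
    ∃ S ⊆ U, ℓ ≤ #S ∧ ∀ w ∈ S, G.Adj z w ∧ IsRainbowReachable C Z I (k + 1) w := by
  obtain ⟨φ, hφ, hφI⟩ := hz
  have hzI : z ∉ I := fun hzI => disjoint_left.1 hTU (hIT hzI) hzU
  have hroots : univ.image φ ⊆ I := image_subset_iff.2 fun c _ => (hφI c).1
  have hP : #(insert z (I \ univ.image φ)) = Fintype.card κ := by
    rw [card_insert_of_notMem (by simp [hzI]), card_sdiff_of_subset hroots,
      card_image_of_injective _ hφ, card_univ]
    omega
  have hother : ∀ y ∈ insert z (I \ univ.image φ), y ≠ z → y ∈ I ∧ ∀ c, φ c ≠ y := by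
    simp +contextual
  obtain ⟨S, hSU, hS, hreach⟩ : ∃ S ⊆ U, ℓ ≤ #S ∧ ∀ w ∈ S,
      (∀ y ∈ insert z (I \ univ.image φ), G.Adj y w) ∧ IsRainbowReachable C Z I (k + 1) w := by
    refine h.exists_isRainbowReachable hGC hP hU hIT hk
      (ρ := fun y c => if y = z then φ c else y) (fun y hy c => ?_)
      fun y hy y' hy' hne c c' => ?_
    · by_cases hyz : y = z
      · simpa [hyz] using hφI c
      · have hyI := (hother y hy hyz).1
        simpa [hyz, hyI] using ReachableWithin.refl (h.mem y (hIT hyI) c)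
    · by_cases hyz : y = z
      · have hy'z : y' ≠ z := fun h => hne (hyz.trans h.symm)
        simpa [hyz, hy'z] using (hother y' hy' hy'z).2 c
      · by_cases hy'z : y' = z
        · simpa [hyz, hy'z] using ((hother y hy hyz).2 c').symm
        · simpa [hyz, hy'z] using hne
  exact ⟨S, hSU, hS, fun w hw => ⟨(hreach w hw).1 z (mem_insert_self _ _), (hreach w hw).2⟩⟩

theorem IsLocallySparse.lt_card_biUnion (hG : IsLocallySparse G m ν ℓ) (hX : X.Nonempty)
    (hXm : #X ≤ m) {S : V → Finset V} (hS : ∀ x ∈ X, ℓ ≤ #(S x))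
    (hadj : ∀ x ∈ X, ∀ y ∈ S x, G.Adj x y) : ν * #X < #(X.biUnion S) := by
  by_contra! hcard
  obtain ⟨x, hx, hlt⟩ := hG X (X.biUnion S) hX hXm hcard
  have hsub : S x ⊆ {y ∈ X.biUnion S | G.Adj x y} := fun y hy =>
    mem_filter.2 ⟨mem_biUnion.2 ⟨x, hx, hy⟩, hadj x hx y hy⟩
  exact ((hS x hx).trans (card_le_card hsub)).not_gt hlt

theorem IsSeparated.exists_large_isRainbowReachable [Nonempty κ] (h : IsSeparated G C U T b N Z)
    (hGC : G ≤ ⨆ c, C c) (hTU : Disjoint T U)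
    (hU : HasCommonNeighbors G U (Fintype.card κ) (Fintype.card κ * (Fintype.card κ * b) + ℓ))
    (hG : IsLocallySparse G m ν ℓ) (hℓ : 0 < ℓ) (hm : 0 < m) (hν : 2 ≤ ν) (hIT : I ⊆ T)
    (hI : #I + 1 = 2 * Fintype.card κ) (hJ : 2 * J + 2 ≤ N) :
    ∃ X ⊆ U, min (ν ^ J) (2 * m) ≤ #X ∧ ∀ z ∈ X, IsRainbowReachable C Z I (J + 1) z := by
  induction J with
  | zero =>
    have hr : Fintype.card κ ≤ #I := by have := Fintype.card_pos (α := κ); omega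
    obtain ⟨P, hPI, hP⟩ := exists_subset_card_eq hr
    obtain ⟨S, hSU, hS, hreach⟩ := h.exists_isRainbowReachable hGC hP hU hIT hJ (ρ := fun y _ => y)
      (fun y hy c => ⟨hPI hy, .refl (h.mem y (hIT (hPI hy)) c)⟩) fun _ _ _ _ hne _ _ => hne
    exact ⟨S, hSU, (min_le_left _ _).trans (hℓ.trans_le hS), fun z hz => (hreach z hz).2⟩
  | succ J ih =>
    obtain ⟨X, hXU, hX, hreach⟩ := ih (by omega)
    obtain ⟨X₀, hX₀X, hX₀⟩ := exists_subset_card_eq (show min (ν ^ J) m ≤ #X by omega)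
    have hpos : 0 < #X₀ := hX₀ ▸ lt_min (by positivity) hm
    have hnbrs : ∀ z ∈ X₀, ∃ S ⊆ U, ℓ ≤ #S ∧
        ∀ w ∈ S, G.Adj z w ∧ IsRainbowReachable C Z I (J + 1 + 1) w := fun z hz =>
      h.exists_neighbors_isRainbowReachable hGC hTU hU hIT hI hJ (hXU (hX₀X hz))
        (hreach z (hX₀X hz))
    choose! S hSU hS hSz using hnbrs
    refine ⟨X₀.biUnion S, biUnion_subset.2 hSU, ?_, fun w hw => ?_⟩
    · have hgrow := hG.lt_card_biUnion (card_pos.1 hpos) (hX₀ ▸ min_le_right _ _) hS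
        fun x hx y hy => (hSz x hx y hy).1
      calc min (ν ^ (J + 1)) (2 * m) ≤ min (ν * ν ^ J) (ν * m) := by
            rw [pow_succ']; gcongr
        _ = ν * #X₀ := by rw [hX₀, Nat.mul_min_mul_left]
        _ ≤ _ := hgrow.le
    · obtain ⟨z, hz, hwz⟩ := mem_biUnion.1 hw
      exact (hSz z hz w hwz).2

theorem IsSeparated.card_lt [Nonempty κ] (h : IsSeparated G C U T b N Z)
    (hGC : G ≤ ⨆ c, C c) (hTU : Disjoint T U)
    (hU : HasCommonNeighbors G U (Fintype.card κ) (Fintype.card κ * (Fintype.card κ * b) + ℓ))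
    (hG : IsLocallySparse G m ν ℓ) (hholes : BipartiteHoleFree G m) (hℓ : 0 < ℓ) (hm : 0 < m)
    (hν : 2 ≤ ν) (hJ : 2 * J + 3 ≤ N) (hνJ : 2 * m ≤ ν ^ J) :
    #T + 2 < 4 * Fintype.card κ := by
  by_contra! hT
  have hr := Fintype.card_pos (α := κ)
  obtain ⟨I, hIT, hI⟩ := exists_subset_card_eq (show 2 * Fintype.card κ - 1 ≤ #T by omega)
  obtain ⟨I', hI'T, hI'⟩ := exists_subset_card_eq (s := T \ I) (n := 2 * Fintype.card κ - 1)
    (by rw [card_sdiff_of_subset hIT]; omega)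
  have hI'sub : I' ⊆ T := hI'T.trans sdiff_subset
  obtain ⟨X, _, hX, hXreach⟩ := h.exists_large_isRainbowReachable hGC hTU hU hG hℓ hm hν hIT
    (by omega) (Nat.le_of_succ_le hJ)
  obtain ⟨Y, _, hY, hYreach⟩ := h.exists_large_isRainbowReachable hGC hTU hU hG hℓ hm hν hI'sub
    (by omega) (Nat.le_of_succ_le hJ)
  rw [min_eq_right hνJ] at hX hY
  obtain ⟨X₀, hX₀X, hX₀⟩ := exists_subset_card_eq (show m ≤ #X by omega)
  obtain ⟨Y₀, hY₀Y, hY₀⟩ := exists_subset_card_eq (s := Y \ X₀) (n := m) (by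
    have := le_card_sdiff X₀ Y; omega)
  obtain ⟨x, hx, y, hy, hxy⟩ := hholes X₀ Y₀ hX₀ hY₀ (disjoint_of_subset_right hY₀Y disjoint_sdiff)
  obtain ⟨c, hc⟩ := SimpleGraph.iSup_adj.1 (hGC hxy)
  obtain ⟨φ, _, hφ⟩ := hXreach x (hX₀X hx)
  obtain ⟨ψ, _, hψ⟩ := hYreach y (sdiff_subset (hY₀Y hy))
  have := h.eq_of_adj (hIT (hφ c).1) (hI'sub (hψ c).1) (hφ c).2 (hψ c).2 hc (by omega)
  exact (Finset.mem_sdiff.1 (hI'T (hψ c).1)).2 (this ▸ (hφ c).1)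

theorem card_le_of_isIndepSet_linkGraph [Nonempty κ]
    (hI : (⨆ c, linkGraph G ℓ (C c) U N).IsIndepSet (I : Set V)) (hGC : G ≤ ⨆ c, C c)
    (hIU : Disjoint I U) (hU : HasCommonNeighbors G U (Fintype.card κ)
      (Fintype.card κ * (Fintype.card κ * (4 * Fintype.card κ * (2 * ℓ))) + ℓ))
    (hG : IsLocallySparse G m ν ℓ) (hholes : BipartiteHoleFree G m) (hℓ : 0 < ℓ) (hm : 0 < m)
    (hν : 2 ≤ ν) (hJ : 2 * J + 3 ≤ N) (hνJ : 2 * m ≤ ν ^ J) :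
    #I ≤ 4 * Fintype.card κ := by
  by_contra! hcard
  obtain ⟨T, hTI, hT⟩ := exists_subset_card_eq hcard.le
  obtain ⟨Z, hZ⟩ := exists_isSeparated_of_isIndepSet (hI.mono (coe_subset.2 hTI)) hT.le
  have := hZ.card_lt hGC (disjoint_of_subset_left hTI hIU) hU hG hholes hℓ hm hν hJ hνJ
  omega

end Independence

section Deterministic

variable {V κ : Type*} [Fintype κ] [Nonempty κ] {G : SimpleGraph V} {Q U : Finset V}
  {ℓ m ν J N s : ℕ}

theorem coverableBy_isMonoCycle
    (hU : HasCommonNeighbors G U (Fintype.card κ)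
      (Fintype.card κ * (Fintype.card κ * (4 * Fintype.card κ * (2 * ℓ))) + ℓ))
    (hG : IsLocallySparse G m ν ℓ) (hholes : BipartiteHoleFree G m) (hℓ : 0 < ℓ) (hm : 0 < m)
    (hJ : 2 * J + 3 ≤ N) (hνJ : 2 * m ≤ ν ^ J) (hN : 4 * N + 1 ≤ ν)
    (hs : (1 - 1 / (2 * (4 * Fintype.card κ : ℕ) * Fintype.card κ : ℝ)) ^ s *
      (8 * ((4 * Fintype.card κ : ℕ) * Fintype.card κ) ^ 2) ≤ 1)
    (hQU : Disjoint Q U) (hQ : #Q ≤ m) (c : Sym2 V → κ) :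
    CoverableBy (fun S => ∃ i, IsMonoCycle G c i S)
      (4 * Fintype.card κ * (s + 4 * (4 * Fintype.card κ * Fintype.card κ) * Fintype.card κ))
      Q := by
  refine (coverableBy_isCycleSet_iSup (H := fun i => linkGraph G ℓ (colorClass G c i) U N)
    (by have := Fintype.card_pos (α := κ); omega) hs le_rfl fun I hIQ hI => ?_).imp ?_
  · exact card_le_of_isIndepSet_linkGraph hI (le_iSup_colorClass G c)
      (disjoint_of_subset_left hIQ hQU) hU hG hholes hℓ hm (by omega) hJ hνJ
  · rintro S ⟨i, hS, hSQ⟩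
    obtain ⟨T, hST, hT⟩ := hS.exists_superset_of_linkGraph hG hN
      (disjoint_of_subset_left hSQ hQU) ((card_le_card hSQ).trans hQ)
    exact ⟨T, hST, i, hT.isMonoCycle⟩

end Deterministic

section Pseudorandom

theorem one_sub_one_div_pow_mul_le_one {x B : ℝ} {s : ℕ} (hx : 1 ≤ x) (hB : 0 < B)
    (hs : x * Real.log B ≤ s) : (1 - 1 / x) ^ s * B ≤ 1 := by
  have hx0 : 0 < x := one_pos.trans_le hx
  have hexp : Real.log B ≤ s / x := by rwa [le_div_iff₀ hx0, mul_comm]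
  calc (1 - 1 / x) ^ s * B ≤ Real.exp (-(1 / x)) ^ s * Real.exp (s / x) := by
        gcongr
        · exact sub_nonneg.2 (div_le_one_of_le₀ hx hx0.le)
        · exact Real.one_sub_le_exp_neg _
        · exact (Real.log_le_iff_le_exp hB).1 hexp
    _ = 1 := by
        rw [← Real.exp_nat_mul, ← Real.exp_add, Real.exp_eq_one_iff]
        ring

theorem exists_pow_mul_le_one_and_mul_le_log {r : ℕ} (hr : 2 ≤ r) : ∃ s : ℕ,
    (1 - 1 / (2 * (4 * r : ℕ) * r : ℝ)) ^ s * (8 * ((4 * r : ℕ) * r) ^ 2) ≤ 1 ∧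
      ((4 * r * (s + 4 * (4 * r * r) * r) : ℕ) : ℝ) ≤ 400 * r ^ 4 * Real.log (4 * r ^ 2) := by
  have hr' : (2 : ℝ) ≤ r := by exact_mod_cast hr
  have hr2 : (4 : ℝ) ≤ r ^ 2 := by nlinarith
  set L : ℝ := Real.log (4 * r ^ 2)
  have hL : 1 ≤ L := by
    rw [Real.le_log_iff_exp_le (by positivity)]
    linarith [Real.exp_one_lt_d9]
  have hB : Real.log (128 * r ^ 4) ≤ 3 * L := by
    calc Real.log (128 * r ^ 4) ≤ Real.log ((4 * r ^ 2) ^ 3) := by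
          refine Real.log_le_log (by positivity) ?_
          nlinarith [mul_le_mul_of_nonneg_left hr2 (by positivity : (0 : ℝ) ≤ 64 * r ^ 4)]
      _ = 3 * L := by rw [Real.log_pow]; push_cast; rfl
  have hlog : 0 ≤ Real.log (128 * r ^ 4) := Real.log_nonneg (by nlinarith)
  have hceil : (⌈8 * r ^ 2 * Real.log (128 * r ^ 4)⌉₊ : ℝ) ≤ 24 * r ^ 2 * L + 1 := by
    refine (Nat.ceil_lt_add_one (by positivity)).le.trans ?_
    nlinarith
  refine ⟨⌈8 * r ^ 2 * Real.log (128 * r ^ 4)⌉₊, ?_, ?_⟩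
  · have hx : 2 * ((4 * r : ℕ) : ℝ) * r = 8 * r ^ 2 := by push_cast; ring
    have hB : 8 * (((4 * r : ℕ) : ℝ) * r) ^ 2 = 128 * r ^ 4 := by push_cast; ring
    rw [hx, hB]
    exact one_sub_one_div_pow_mul_le_one (by linarith) (by positivity) (Nat.le_ceil _)
  · calc ((4 * r * (⌈8 * r ^ 2 * Real.log (128 * r ^ 4)⌉₊ + 4 * (4 * r * r) * r) : ℕ) : ℝ)
        ≤ 4 * r * (24 * r ^ 2 * L + 1 + 4 * (4 * r * r) * r) := by push_cast; gcongr
      _ = 96 * (r ^ 3 * 1) * L + 4 * (r * 1) * 1 + 64 * r ^ 4 * 1 := by ring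
      _ ≤ 96 * (r ^ 3 * r) * L + 4 * (r * r ^ 3) * L + 64 * r ^ 4 * L := by
          gcongr
          · linarith
          · nlinarith
      _ = 164 * r ^ 4 * L := by ring
      _ ≤ 400 * r ^ 4 * L := by gcongr; norm_num

variable {V : Type*} {G : SimpleGraph V} {Q U : Finset V} {r m ν J : ℕ}

/-- The properties of a random graph that the covering argument uses, with thresholds expressed
through a single parameter `ν`; `U` supplies the connecting vertices. -/
structure IsPseudorandom (G : SimpleGraph V) (U : Finset V) (r m ν : ℕ) : Prop where
  hasCommonNeighbors : HasCommonNeighbors G U r (r * (r * (4 * r * (2 * ν ^ 3))) + ν ^ 3)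
  bipartiteHoleFree : BipartiteHoleFree G m
  isLocallySparse : IsLocallySparse G m ν (ν ^ 3)

theorem IsPseudorandom.exists_isMonoCycle_cover (h : IsPseudorandom G U r m ν) (hr : 2 ≤ r)
    (hm : 0 < m) (hνJ : 2 * m ≤ ν ^ J) (hJ : 8 * J + 13 ≤ ν) (hQU : Disjoint Q U) (hQ : #Q ≤ m)
    (c : Sym2 V → Fin r) :
    ∃ 𝒞 : Finset (Set V), (#𝒞 : ℝ) ≤ 400 * r ^ 4 * Real.log (4 * r ^ 2) ∧
      (∀ S ∈ 𝒞, ∃ i, IsMonoCycle G c i S) ∧ (Q : Set V) ⊆ ⋃₀ (𝒞 : Set (Set V)) := by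
  have : NeZero r := ⟨by omega⟩
  have hν : 0 < ν := by omega
  obtain ⟨s, hs, hcount⟩ := exists_pow_mul_le_one_and_mul_le_log hr
  obtain ⟨𝒞, hcard, hmono, hcov⟩ := CoverableBy.exists_subset_sUnion
    (P := fun S => ∃ i, IsMonoCycle G c i S) <|
    coverableBy_isMonoCycle (J := J) (N := 2 * J + 3) (by simpa using h.hasCommonNeighbors)
      h.isLocallySparse h.bipartiteHoleFree (by positivity) hm le_rfl hνJ (by omega)
      (by simpa using hs) hQU hQ c
  exact ⟨𝒞, (Nat.cast_le.2 (by simpa using hcard)).trans hcount, hmono, hcov⟩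

end Pseudorandom

section Chernoff

open ProbabilityTheory

variable {Ω ι : Type*} [MeasurableSpace Ω] {μ : Measure Ω} [IsProbabilityMeasure μ]
  {A : ι → Set Ω} {s : Finset ι}

theorem mgf_indicator_one {A : Set Ω} (hA : MeasurableSet A) (t : ℝ) :
    mgf (A.indicator 1) μ t = 1 + (Real.exp t - 1) * μ.real A := by
  have hexp : (fun ω => Real.exp (t * A.indicator 1 ω)) =
      fun ω => 1 + (Real.exp t - 1) * A.indicator 1 ω := by
    ext ω
    by_cases hω : ω ∈ A <;> simp [hω]
  rw [mgf, hexp, integral_add (integrable_const _)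
    (((integrable_const 1).indicator hA).const_mul _), integral_const_mul,
    integral_indicator_one hA]
  simp

theorem mgf_card_filter_mem_le (hA : ∀ i, MeasurableSet (A i))
    (hindep : iIndepSet (fun i : s => A i) μ) (t : ℝ) :
    mgf (fun ω => (#{i ∈ s | ω ∈ A i} : ℝ)) μ t ≤
      Real.exp ((Real.exp t - 1) * ∑ i ∈ s, μ.real (A i)) := by
  have hsum : (fun ω => (#{i ∈ s | ω ∈ A i} : ℝ)) = ∑ i : s, (A i).indicator 1 := by
    ext ω
    simp only [card_filter, Nat.cast_sum, Nat.cast_ite, Nat.cast_one, Nat.cast_zero,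
      Finset.sum_apply, Set.indicator_apply, Pi.one_apply,
      sum_coe_sort s fun i => if ω ∈ A i then (1 : ℝ) else 0]
  have hprod : mgf (∑ i : s, (A i).indicator 1) μ t = ∏ i : s, mgf ((A i).indicator 1) μ t :=
    hindep.iIndepFun_indicator.mgf_sum (fun i => measurable_one.indicator (hA i)) univ
  rw [hsum, hprod]
  calc ∏ i : s, mgf ((A i).indicator 1) μ t
      = ∏ i : s, (1 + (Real.exp t - 1) * μ.real (A i)) :=
        prod_congr rfl fun i _ => mgf_indicator_one (hA i) t
    _ ≤ ∏ i : s, Real.exp ((Real.exp t - 1) * μ.real (A i)) := by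
        refine Finset.prod_le_prod (fun i _ => ?_) fun i _ => ?_
        · rw [← mgf_indicator_one (hA i)]
          exact mgf_nonneg
        · linarith [Real.add_one_le_exp ((Real.exp t - 1) * μ.real (A i))]
    _ = Real.exp ((Real.exp t - 1) * ∑ i ∈ s, μ.real (A i)) := by
        rw [← Real.exp_sum, ← mul_sum, sum_coe_sort s fun i => μ.real (A i)]

theorem integrable_exp_mul_card_filter_mem (hA : ∀ i, MeasurableSet (A i)) (t : ℝ) :
    Integrable (fun ω => Real.exp (t * #{i ∈ s | ω ∈ A i})) μ := by
  refine integrable_exp_mul_of_mem_Icc (a := 0) (b := #s) ?_ (.of_forall fun ω =>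
    ⟨Nat.cast_nonneg _, Nat.cast_le.2 (card_filter_le _ _)⟩)
  simp only [card_filter, Nat.cast_sum, Nat.cast_ite, Nat.cast_one, Nat.cast_zero]
  exact (Finset.measurable_sum s fun i _ =>
    Measurable.ite (hA i) measurable_const measurable_const).aemeasurable

theorem measureReal_card_filter_mem_le (hA : ∀ i, MeasurableSet (A i))
    (hindep : iIndepSet (fun i : s => A i) μ) (a : ℝ) :
    μ.real {ω | (#{i ∈ s | ω ∈ A i} : ℝ) ≤ a} ≤
      Real.exp (a - (∑ i ∈ s, μ.real (A i)) / 2) := by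
  have hsum : 0 ≤ ∑ i ∈ s, μ.real (A i) := sum_nonneg fun i _ => measureReal_nonneg
  have hexp : Real.exp (-1) - 1 ≤ -(1 / 2) := by linarith [Real.exp_neg_one_lt_d9]
  calc μ.real {ω | (#{i ∈ s | ω ∈ A i} : ℝ) ≤ a}
      ≤ Real.exp (-(-1) * a) * mgf (fun ω => (#{i ∈ s | ω ∈ A i} : ℝ)) μ (-1) :=
        measure_le_le_exp_mul_mgf a (by norm_num) (integrable_exp_mul_card_filter_mem hA _)
    _ ≤ Real.exp (-(-1) * a) * Real.exp (-(1 / 2) * ∑ i ∈ s, μ.real (A i)) := by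
        gcongr
        exact (mgf_card_filter_mem_le hA hindep _).trans
          (Real.exp_le_exp.2 (mul_le_mul_of_nonneg_right hexp hsum))
    _ = Real.exp (a - (∑ i ∈ s, μ.real (A i)) / 2) := by
        rw [← Real.exp_add]
        ring_nf

theorem measureReal_le_card_filter_mem (hA : ∀ i, MeasurableSet (A i))
    (hindep : iIndepSet (fun i : s => A i) μ) (a : ℝ) :
    μ.real {ω | a ≤ #{i ∈ s | ω ∈ A i}} ≤ Real.exp (2 * ∑ i ∈ s, μ.real (A i) - a) := by
  have hsum : 0 ≤ ∑ i ∈ s, μ.real (A i) := sum_nonneg fun i _ => measureReal_nonneg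
  have hexp : Real.exp 1 - 1 ≤ 2 := by linarith [Real.exp_one_lt_d9]
  calc μ.real {ω | a ≤ #{i ∈ s | ω ∈ A i}}
      ≤ Real.exp (-1 * a) * mgf (fun ω => (#{i ∈ s | ω ∈ A i} : ℝ)) μ 1 :=
        measure_ge_le_exp_mul_mgf a zero_le_one (integrable_exp_mul_card_filter_mem hA _)
    _ ≤ Real.exp (-1 * a) * Real.exp (2 * ∑ i ∈ s, μ.real (A i)) := by
        gcongr
        exact (mgf_card_filter_mem_le hA hindep _).trans
          (Real.exp_le_exp.2 (mul_le_mul_of_nonneg_right hexp hsum))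
    _ = Real.exp (2 * ∑ i ∈ s, μ.real (A i) - a) := by
        rw [← Real.exp_add]
        ring_nf

end Chernoff

section Bernoulli

open ProbabilityTheory

variable {E ι : Type*} [Fintype E] {q : ℝ} {s : Finset ι} {B : ι → Finset E} {k : ℕ}

theorem isProbabilityMeasure_bernoulliM (h0 : 0 ≤ q) (h1 : q ≤ 1) :
    IsProbabilityMeasure (bernoulliM q) :=
  ⟨by simp [bernoulliM, ← ENNReal.ofReal_add h0 (sub_nonneg.2 h1)]⟩

theorem pi_bernoulliM_forall_eq_true (h0 : 0 ≤ q) (h1 : q ≤ 1) (F : Finset E) :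
    Measure.pi (fun _ : E => bernoulliM q) {ω | ∀ e ∈ F, ω e = true} = ENNReal.ofReal q ^ #F := by
  have := isProbabilityMeasure_bernoulliM h0 h1
  have hset : {ω : E → Bool | ∀ e ∈ F, ω e = true} = (F : Set E).pi fun _ => {true} := by
    ext ω
    simp [Set.mem_pi]
  rw [hset, Measure.pi_pi_finset, prod_const]
  simp [bernoulliM]

theorem pi_bernoulliM_real_forall_eq_true (h0 : 0 ≤ q) (h1 : q ≤ 1) (F : Finset E) :
    (Measure.pi fun _ : E => bernoulliM q).real {ω | ∀ e ∈ F, ω e = true} = q ^ #F := by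
  rw [Measure.real, pi_bernoulliM_forall_eq_true h0 h1, ENNReal.toReal_pow,
    ENNReal.toReal_ofReal h0]

theorem iIndepSet_forall_eq_true (h0 : 0 ≤ q) (h1 : q ≤ 1) (hB : (s : Set ι).PairwiseDisjoint B) :
    iIndepSet (fun i : s => {ω : E → Bool | ∀ e ∈ B i, ω e = true})
      (Measure.pi fun _ => bernoulliM q) := by
  rw [iIndepSet_iff_meas_biInter fun i => (Set.toFinite _).measurableSet]
  intro t
  have hdisj : (t : Set s).PairwiseDisjoint fun i : s => B i := fun i _ j _ hij =>
    hB i.2 j.2 (Subtype.coe_ne_coe.2 hij)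
  have hset : ⋂ i ∈ t, {ω : E → Bool | ∀ e ∈ B i, ω e = true} =
      {ω | ∀ e ∈ t.biUnion fun i => B i, ω e = true} := by
    ext ω
    simp only [Set.mem_iInter, Set.mem_ofPred_eq, mem_biUnion]
    exact ⟨fun h e ⟨i, hi, he⟩ => h i hi e he, fun h i hi e he => h e ⟨i, hi, he⟩⟩
  simp_rw [hset, pi_bernoulliM_forall_eq_true h0 h1, card_biUnion hdisj, prod_pow_eq_pow_sum]

theorem pi_bernoulliM_real_card_blocks_le (h0 : 0 ≤ q) (h1 : q ≤ 1)
    (hB : (s : Set ι).PairwiseDisjoint B) (hk : ∀ i ∈ s, #(B i) = k) (a : ℝ) :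
    (Measure.pi fun _ : E => bernoulliM q).real
      {ω | (#{i ∈ s | ∀ e ∈ B i, ω e = true} : ℝ) ≤ a} ≤ Real.exp (a - #s * q ^ k / 2) := by
  have := isProbabilityMeasure_bernoulliM h0 h1
  have hmean : ∑ i ∈ s, (Measure.pi fun _ : E => bernoulliM q).real
      {ω | ∀ e ∈ B i, ω e = true} = #s * q ^ k := by
    rw [sum_congr rfl fun i hi => by rw [pi_bernoulliM_real_forall_eq_true h0 h1, hk i hi],
      sum_const, nsmul_eq_mul]
  rw [← hmean]
  simpa only [Set.mem_ofPred_eq] using measureReal_card_filter_mem_le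
    (A := fun i => {ω : E → Bool | ∀ e ∈ B i, ω e = true})
    (fun i => (Set.toFinite _).measurableSet) (iIndepSet_forall_eq_true h0 h1 hB) a

theorem pi_bernoulliM_real_le_card_filter (h0 : 0 ≤ q) (h1 : q ≤ 1) (F : Finset E) (a : ℝ) :
    (Measure.pi fun _ : E => bernoulliM q).real {ω | a ≤ #{e ∈ F | ω e = true}} ≤
      Real.exp (2 * (#F * q) - a) := by
  have := isProbabilityMeasure_bernoulliM h0 h1
  have hmean : ∑ e ∈ F, (Measure.pi fun _ : E => bernoulliM q).real
      {ω | ∀ e' ∈ ({e} : Finset E), ω e' = true} = #F * q := by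
    simp only [pi_bernoulliM_real_forall_eq_true h0 h1, card_singleton, pow_one, sum_const,
      nsmul_eq_mul]
  rw [← hmean]
  simpa only [Set.mem_ofPred_eq, mem_singleton, forall_eq] using measureReal_le_card_filter_mem
    (A := fun e => {ω : E → Bool | ∀ e' ∈ ({e} : Finset E), ω e' = true})
    (fun e => (Set.toFinite _).measurableSet)
    (iIndepSet_forall_eq_true h0 h1 fun e _ e' _ h => disjoint_singleton.2 h) a

end Bernoulli

section RandomGraph

variable {α ι Ω : Type*} {n m ν ℓ k : ℕ} {q : ℝ}

theorem card_filter_card_le_le_pow [Fintype α] (k : ℕ) :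
    #{Y : Finset α | #Y ≤ k} ≤ (Fintype.card α + 1) ^ k := by
  have hsub : ({Y : Finset α | #Y ≤ k} : Finset (Finset α)) ⊆
      (range (k + 1)).biUnion fun j => powersetCard j univ := fun Y hY => by
    simpa [Nat.lt_succ_iff] using hY
  calc #{Y : Finset α | #Y ≤ k} ≤ ∑ j ∈ range (k + 1), #(powersetCard j (univ : Finset α)) :=
        (card_le_card hsub).trans card_biUnion_le
    _ ≤ ∑ j ∈ range (k + 1), Fintype.card α ^ j * k.choose j := sum_le_sum fun j hj => by
        rw [card_powersetCard, card_univ]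
        exact (Nat.choose_le_pow _ j).trans
          (Nat.le_mul_of_pos_right _ (Nat.choose_pos (mem_range_succ_iff.1 hj)))
    _ = (Fintype.card α + 1) ^ k := by simp [add_pow]

theorem card_le_exp_of_forall_card_le {S : Finset (Finset (Fin n))} (hS : ∀ P ∈ S, #P ≤ k) :
    (#S : ℝ) ≤ Real.exp (k * Real.log (n + 1)) := by
  have hcard : #S ≤ (n + 1) ^ k := by
    simpa using (card_le_card fun P hP => by simpa using hS P hP).trans
      (card_filter_card_le_le_pow (α := Fin n) k)
  rw [Real.exp_nat_mul, Real.exp_log (by positivity)]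
  exact_mod_cast hcard

theorem measureReal_le_card_mul [MeasurableSpace Ω] {μ : Measure Ω} [IsFiniteMeasure μ]
    {S : Finset ι} {A : Set Ω} {B : ι → Set Ω} {b : ℝ} (hA : ∀ ω ∈ A, ∃ i ∈ S, ω ∈ B i)
    (hB : ∀ i ∈ S, μ.real (B i) ≤ b) : μ.real A ≤ #S * b := by
  calc μ.real A ≤ μ.real (⋃ i ∈ S, B i) :=
        measureReal_mono (fun ω hω => by simpa using hA ω hω) (measure_ne_top _ _)
    _ ≤ ∑ i ∈ S, μ.real (B i) := measureReal_biUnion_finset_le _ _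
    _ ≤ #S * b := by simpa using sum_le_sum hB

theorem isProbabilityMeasure_gnp (h0 : 0 ≤ q) (h1 : q ≤ 1) : IsProbabilityMeasure (gnp n q) := by
  have := isProbabilityMeasure_bernoulliM h0 h1
  unfold gnp
  infer_instance

theorem gnp_real_card_blocks_le (h0 : 0 ≤ q) (h1 : q ≤ 1) {s : Finset ι}
    {B : ι → Finset (Sym2 (Fin n))} (hB : (s : Set ι).PairwiseDisjoint B)
    (hk : ∀ i ∈ s, #(B i) = k) (a : ℝ) :
    (gnp n q).real {ω | (#{i ∈ s | ∀ e ∈ B i, ω e = true} : ℝ) ≤ a} ≤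
      Real.exp (a - #s * q ^ k / 2) := by
  rw [gnp]
  convert pi_bernoulliM_real_card_blocks_le h0 h1 hB hk a

theorem gnp_real_le_card_filter (h0 : 0 ≤ q) (h1 : q ≤ 1) (F : Finset (Sym2 (Fin n))) (a : ℝ) :
    (gnp n q).real {ω | a ≤ #{e ∈ F | ω e = true}} ≤ Real.exp (2 * (#F * q) - a) :=
  pi_bernoulliM_real_le_card_filter h0 h1 F a

theorem graphOf_adj {ω : Sym2 (Fin n) → Bool} {u v : Fin n} :
    (graphOf ω).Adj u v ↔ u ≠ v ∧ ω s(u, v) = true := by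
  rw [graphOf, SimpleGraph.fromRel_adj, Sym2.eq_swap (a := v), or_self]

theorem gnp_real_not_hasCommonNeighbors_le (h0 : 0 ≤ q) (h1 : q ≤ 1) (U : Finset (Fin n))
    (r L : ℕ) :
    (gnp n q).real {ω | ¬ HasCommonNeighbors (graphOf ω) U r L} ≤
      Real.exp (r * Real.log (n + 1)) * Real.exp (L - (#U - r) * q ^ r / 2) := by
  have := isProbabilityMeasure_gnp (n := n) h0 h1
  refine (measureReal_le_card_mul (S := powersetCard r univ)
    (B := fun P => {ω | (#{u ∈ U \ P | ∀ e ∈ P.image fun v => s(v, u), ω e = true} : ℝ) ≤ L})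
    (b := Real.exp (L - (#U - r) * q ^ r / 2)) ?_ ?_).trans ?_
  · intro ω hω
    simp only [HasCommonNeighbors, Set.mem_ofPred_eq, not_forall, not_le] at hω
    obtain ⟨P, hP, hlt⟩ := hω
    refine ⟨P, by simpa using hP, ?_⟩
    rw [Set.mem_ofPred_eq, Nat.cast_le]
    refine (card_le_card fun u hu => ?_).trans hlt.le
    simp only [mem_filter, Finset.mem_sdiff, forall_mem_image] at hu ⊢
    exact ⟨hu.1.1, fun v hv => graphOf_adj.2 ⟨fun h => hu.1.2 (h ▸ hv), hu.2 hv⟩⟩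
  · intro P hP
    have hPr : #P = r := (mem_powersetCard.1 hP).2
    have hdisj : ((U \ P : Finset (Fin n)) : Set (Fin n)).PairwiseDisjoint
        fun u => P.image fun v => s(v, u) := by
      intro u hu u' _ hne
      refine Finset.disjoint_left.2 fun e he he' => ?_
      obtain ⟨v, _, rfl⟩ := mem_image.1 he
      obtain ⟨v', hv', heq⟩ := mem_image.1 he'
      rcases Sym2.eq_iff.1 heq with ⟨-, h⟩ | ⟨h, -⟩
      · exact hne h.symm
      · exact (Finset.mem_sdiff.1 hu).2 (h ▸ hv')
    refine (gnp_real_card_blocks_le h0 h1 hdisj (k := r) (fun u _ => ?_) L).trans ?_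
    · exact (card_image_of_injective _ fun _ _ h => Sym2.congr_left.1 h).trans hPr
    · have hcard : (#U - r : ℝ) ≤ #(U \ P) := by
        rw [sub_le_iff_le_add, ← hPr]
        exact_mod_cast Nat.sub_le_iff_le_add.1 (le_card_sdiff P U)
      gcongr
  · gcongr
    exact card_le_exp_of_forall_card_le fun P hP => (mem_powersetCard.1 hP).2.le

theorem gnp_real_not_bipartiteHoleFree_le (h0 : 0 ≤ q) (h1 : q ≤ 1) (m : ℕ) :
    (gnp n q).real {ω | ¬ BipartiteHoleFree (graphOf ω) m} ≤
      Real.exp (m * Real.log (n + 1)) ^ 2 * Real.exp (-(m ^ 2 * q / 2)) := by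
  have := isProbabilityMeasure_gnp (n := n) h0 h1
  let S : Finset (Finset (Fin n)) := powersetCard m univ
  refine (measureReal_le_card_mul (S := {P ∈ S ×ˢ S | Disjoint P.1 P.2})
    (B := fun P => {ω | (#{z ∈ P.1 ×ˢ P.2 | ∀ e ∈ ({s(z.1, z.2)} : Finset _), ω e = true} : ℝ) ≤ 0})
    (b := Real.exp (-(m ^ 2 * q / 2))) ?_ ?_).trans ?_
  · intro ω hω
    simp only [BipartiteHoleFree, Set.mem_ofPred_eq, not_forall, not_exists, not_and] at hω
    obtain ⟨X, Y, hX, hY, hXY, hno⟩ := hω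
    refine ⟨(X, Y), by simp [S, hX, hY, hXY], ?_⟩
    simp only [Set.mem_ofPred_eq, Nat.cast_nonpos, card_eq_zero, filter_eq_empty_iff, mem_product,
      mem_singleton, forall_eq]
    exact fun z hz h => hno z.1 hz.1 z.2 hz.2
      (graphOf_adj.2 ⟨disjoint_iff_ne.1 hXY _ hz.1 _ hz.2, h⟩)
  · rintro ⟨X, Y⟩ hXY
    simp only [S, mem_filter, mem_product, mem_powersetCard_univ] at hXY
    obtain ⟨⟨hX, hY⟩, hdisj⟩ := hXY
    refine (gnp_real_card_blocks_le h0 h1 (k := 1) ?_ (fun _ _ => card_singleton _)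
      0).trans (le_of_eq ?_)
    · intro z hz z' hz' hne
      simp only [coe_product, Set.mem_prod, mem_coe] at hz hz'
      refine disjoint_singleton.2 fun h => ?_
      rcases Sym2.eq_iff.1 h with h | ⟨h, -⟩
      · exact hne (Prod.ext h.1 h.2)
      · exact disjoint_iff_ne.1 hdisj _ hz.1 _ hz'.2 h
    · rw [card_product, hX, hY]
      push_cast
      ring_nf
  · gcongr
    calc (#{P ∈ S ×ˢ S | Disjoint P.1 P.2} : ℝ) ≤ #S ^ 2 := by
          rw [sq]
          exact_mod_cast (card_filter_le _ _).trans (card_product S S).le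
      _ ≤ Real.exp (m * Real.log (n + 1)) ^ 2 := by
          gcongr
          exact card_le_exp_of_forall_card_le fun P hP => (mem_powersetCard.1 hP).2.le

theorem card_mul_le_card_filter_image₂_mul_two {V : Type*} [DecidableEq V] {X Y : Finset V}
    {p : Sym2 V → Prop} [DecidablePred p]
    (h : ∀ v ∈ X, ℓ ≤ #{w ∈ Y | p s(v, w)}) :
    #X * ℓ ≤ #{e ∈ image₂ (fun v w => s(v, w)) X Y | p e} * 2 := by
  refine card_mul_le_card_mul (fun v e => v ∈ e) (fun v hv => (h v hv).trans ?_) fun e _ => ?_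
  · refine card_le_card_of_injOn (fun w => s(v, w)) (fun w hw => ?_)
      fun w _ w' _ hww' => Sym2.congr_right.1 hww'
    obtain ⟨hwY, hw⟩ := mem_filter.1 hw
    simpa [bipartiteAbove, hw] using mem_image₂_of_mem (f := fun v w => s(v, w)) hv hwY
  · induction e with
    | _ u v =>
      refine (card_le_card (t := {u, v}) fun z hz => ?_).trans card_le_two
      simpa [bipartiteBelow] using (mem_filter.1 hz).2

theorem gnp_real_exists_dense_pair_le (h0 : 0 ≤ q) (h1 : q ≤ 1) (x y ℓ : ℕ) :
    (gnp n q).real {ω | ∃ X Y : Finset (Fin n), #X = x ∧ #Y ≤ y ∧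
      ∀ v ∈ X, ℓ ≤ #{w ∈ Y | (graphOf ω).Adj v w}} ≤
      Real.exp ((x + y) * Real.log (n + 1)) * Real.exp (2 * (x * y * q) - x * ℓ / 2) := by
  have := isProbabilityMeasure_gnp (n := n) h0 h1
  refine (measureReal_le_card_mul
    (S := powersetCard x (univ : Finset (Fin n)) ×ˢ ({Y | #Y ≤ y} : Finset (Finset (Fin n))))
    (B := fun P => {ω | (x * ℓ / 2 : ℝ) ≤ #{e ∈ image₂ (fun v w => s(v, w)) P.1 P.2 | ω e = true}})
    (b := Real.exp (2 * (x * y * q) - x * ℓ / 2)) ?_ ?_).trans ?_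
  · rintro ω ⟨X, Y, rfl, hY, hdeg⟩
    refine ⟨(X, Y), by simpa using hY, ?_⟩
    have hcount := card_mul_le_card_filter_image₂_mul_two (p := fun e => ω e = true) fun v hv =>
      (hdeg v hv).trans (card_le_card <| monotone_filter_right _ fun w _ hw => (graphOf_adj.1 hw).2)
    rw [Set.mem_ofPred_eq, div_le_iff₀ two_pos]
    exact_mod_cast hcount
  · rintro ⟨X, Y⟩ hXY
    obtain ⟨hX, hY⟩ : #X = x ∧ #Y ≤ y := by simpa using hXY
    refine (gnp_real_le_card_filter h0 h1 _ _).trans ?_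
    have hcard : (#(image₂ (fun v w => s(v, w)) X Y) : ℝ) ≤ x * y := by
      exact_mod_cast (card_image₂_le _ _ _).trans (Nat.mul_le_mul hX.le hY)
    gcongr
  · gcongr
    rw [card_product, Nat.cast_mul, add_mul, Real.exp_add]
    gcongr <;> refine card_le_exp_of_forall_card_le fun P hP => ?_
    · exact (mem_powersetCard.1 hP).2.le
    · simpa using hP

theorem gnp_real_not_isLocallySparse_le {D : ℝ} (h0 : 0 ≤ q) (h1 : q ≤ 1) (hD : 0 ≤ D)
    (hℓ : (1 + ν) * Real.log (n + 1) + 2 * (q * m * ν) + D ≤ ℓ / 2) :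
    (gnp n q).real {ω | ¬ IsLocallySparse (graphOf ω) m ν ℓ} ≤ n * Real.exp (-D) := by
  have := isProbabilityMeasure_gnp (n := n) h0 h1
  have hcard : (#{x ∈ Icc 1 n | x ≤ m} : ℝ) ≤ n := by
    simpa using card_filter_le (Icc 1 n) (· ≤ m)
  refine (measureReal_le_card_mul (S := {x ∈ Icc 1 n | x ≤ m})
    (B := fun x => {ω | ∃ X Y : Finset (Fin n), #X = x ∧ #Y ≤ ν * x ∧
      ∀ v ∈ X, ℓ ≤ #{w ∈ Y | (graphOf ω).Adj v w}}) (b := Real.exp (-D)) ?_ ?_).trans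
    (mul_le_mul_of_nonneg_right hcard (Real.exp_pos _).le)
  · intro ω hω
    simp only [IsLocallySparse, Set.mem_ofPred_eq, not_forall, not_exists, not_and, not_lt] at hω
    obtain ⟨X, Y, hX, hXm, hY, hdeg⟩ := hω
    have hXn : #X ≤ n := by simpa using card_le_univ X
    exact ⟨#X, by simp [hXn, hXm, Nat.one_le_iff_ne_zero, hX.ne_empty], X, Y, rfl, hY,
      hdeg⟩
  · intro x hx
    simp only [mem_filter, mem_Icc] at hx
    have hx1 : (1 : ℝ) ≤ x := by exact_mod_cast hx.1.1
    have hxm : (x : ℝ) ≤ m := by exact_mod_cast hx.2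
    refine (gnp_real_exists_dense_pair_le h0 h1 x (ν * x) ℓ).trans ?_
    rw [← Real.exp_add, Real.exp_le_exp]
    push_cast
    calc (x + ν * x) * Real.log (n + 1) + (2 * (x * (ν * x) * q) - x * ℓ / 2)
        = x * ((1 + ν) * Real.log (n + 1) + 2 * (q * x * ν) - ℓ / 2) := by ring
      _ ≤ x * ((1 + ν) * Real.log (n + 1) + 2 * (q * m * ν) - ℓ / 2) := by gcongr
      _ ≤ x * -D := by gcongr; linarith
      _ ≤ -D := by nlinarith

end RandomGraph

section Parameters

variable {n r m ν : ℕ} {q ε : ℝ} {U : Finset (Fin n)}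

theorem gnp_real_not_hasCommonNeighbors_le_exp (h0 : 0 ≤ q) (h1 : q ≤ 1) (hn : 4 * r ≤ n)
    (hU : (n : ℝ) / 2 ≤ #U) (hν : 8 * (8 * r ^ 3 + r + 2) ≤ ν) (hlog : Real.log (n + 1) ≤ ν)
    (hq : (ν : ℝ) ^ 4 ≤ n * q ^ r) :
    (gnp n q).real {ω | ¬ HasCommonNeighbors (graphOf ω) U r
      (r * (r * (4 * r * (2 * ν ^ 3))) + ν ^ 3)} ≤ Real.exp (-Real.log (n + 1)) := by
  refine (gnp_real_not_hasCommonNeighbors_le h0 h1 U r _).trans ?_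
  rw [← Real.exp_add, Real.exp_le_exp]
  push_cast
  have hn' : (4 * r : ℝ) ≤ n := by exact_mod_cast hn
  have hν' : 8 * (8 * (r : ℝ) ^ 3 + r + 2) ≤ ν := by exact_mod_cast hν
  have hν1 : (1 : ℝ) ≤ ν := by exact_mod_cast (by omega : 1 ≤ ν)
  have hlog3 : Real.log (n + 1) ≤ ν ^ 3 := hlog.trans (le_self_pow₀ hν1 (by norm_num))
  have hcommon : (ν : ℝ) ^ 4 / 4 ≤ (#U - r) * q ^ r := by
    calc (ν : ℝ) ^ 4 / 4 ≤ (n / 4) * q ^ r := by linarith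
      _ ≤ (#U - r) * q ^ r := by gcongr; linarith
  have hpow : 8 * (8 * (r : ℝ) ^ 3 + r + 2) * ν ^ 3 ≤ ν ^ 4 := by
    calc 8 * (8 * (r : ℝ) ^ 3 + r + 2) * ν ^ 3 ≤ ν * (ν : ℝ) ^ 3 := by gcongr
      _ = (ν : ℝ) ^ 4 := by ring
  have hrlog : (r + 1) * Real.log (n + 1) ≤ (r + 1) * ν ^ 3 := by gcongr
  linarith

theorem gnp_real_not_bipartiteHoleFree_le_exp (h0 : 0 ≤ q) (h1 : q ≤ 1) (hm : 0 < m)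
    (hlog : 16 * Real.log (n + 1) ≤ ν) (hqm : ν ≤ q * m) :
    (gnp n q).real {ω | ¬ BipartiteHoleFree (graphOf ω) m} ≤ Real.exp (-Real.log (n + 1)) := by
  refine (gnp_real_not_bipartiteHoleFree_le h0 h1 m).trans ?_
  rw [← Real.exp_nat_mul, ← Real.exp_add, Real.exp_le_exp]
  have hlog0 : 0 ≤ Real.log ((n : ℝ) + 1) := Real.log_nonneg (by simp)
  have hm1 : (1 : ℝ) ≤ m := by exact_mod_cast hm
  have hedges : m * (16 * Real.log (n + 1)) ≤ m * (q * m) :=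
    mul_le_mul_of_nonneg_left (hlog.trans hqm) m.cast_nonneg
  have hmlog : Real.log (n + 1) ≤ m * Real.log (n + 1) := le_mul_of_one_le_left hlog0 hm1
  push_cast
  linarith

theorem gnp_real_not_isLocallySparse_le_exp (h0 : 0 ≤ q) (h1 : q ≤ 1) (hν : 8 ≤ ν)
    (hlog : 16 * Real.log (n + 1) ≤ ν) (hqm : q * m ≤ ν + 1) :
    (gnp n q).real {ω | ¬ IsLocallySparse (graphOf ω) m ν (ν ^ 3)} ≤
      Real.exp (-Real.log (n + 1)) := by
  have hlog0 : 0 ≤ Real.log ((n : ℝ) + 1) := Real.log_nonneg (by simp)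
  have hν8 : (8 : ℝ) ≤ ν := by exact_mod_cast hν
  have hℓ : (1 + ν) * Real.log (n + 1) + 2 * (q * m * ν) + 2 * Real.log (n + 1) ≤
      (ν ^ 3 : ℕ) / 2 := by
    have hlogν : (ν + 3) * (16 * Real.log (n + 1)) ≤ (ν + 3) * ν := by gcongr
    have hqmν : q * m * ν ≤ (ν + 1) * ν := by gcongr
    have hν2 : (8 * ν : ℝ) ≤ ν ^ 2 := by nlinarith
    have hν3 : 8 * (ν : ℝ) ^ 2 ≤ ν ^ 3 := by nlinarith [sq_nonneg (ν : ℝ)]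
    push_cast
    linarith
  refine (gnp_real_not_isLocallySparse_le h0 h1 (by positivity) hℓ).trans ?_
  calc n * Real.exp (-(2 * Real.log (n + 1)))
      ≤ (n + 1) * Real.exp (-(2 * Real.log (n + 1))) := by gcongr; linarith
    _ = Real.exp (-Real.log (n + 1)) := by
        nth_rw 1 [← Real.exp_log (by positivity : (0 : ℝ) < n + 1)]
        rw [← Real.exp_add]
        ring_nf

theorem le_mul_natCeil_div (hq : 0 < q) (ν : ℕ) : (ν : ℝ) ≤ q * ⌈ν / q⌉₊ :=
  (div_le_iff₀' hq).1 (Nat.le_ceil _)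

theorem mul_natCeil_div_le (h0 : 0 < q) (h1 : q ≤ 1) (ν : ℕ) : q * ⌈ν / q⌉₊ ≤ ν + 1 := by
  calc q * ⌈ν / q⌉₊ ≤ q * (ν / q + 1) := by
        gcongr
        exact (Nat.ceil_lt_add_one (by positivity)).le
    _ = ν + q := by field_simp
    _ ≤ ν + 1 := by gcongr

theorem gnp_real_not_isPseudorandom_le (h0 : 0 < q) (h1 : q ≤ 1) (hn : 4 * r ≤ n)
    (hU : (n : ℝ) / 2 ≤ #U) (hν : 8 * (8 * r ^ 3 + r + 2) ≤ ν)
    (hlog : 16 * Real.log (n + 1) ≤ ν) (hq : (ν : ℝ) ^ 4 ≤ n * q ^ r) :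
    (gnp n q).real {ω | ¬ IsPseudorandom (graphOf ω) U r ⌈ν / q⌉₊ ν} ≤ 3 / (n + 1) := by
  have := isProbabilityMeasure_gnp (n := n) h0.le h1
  have hν0 : (0 : ℝ) < ν := by exact_mod_cast (by omega : 0 < ν)
  set m := ⌈ν / q⌉₊
  have hm : 0 < m := Nat.ceil_pos.2 (by positivity)
  have hlog1 : Real.log (n + 1) ≤ ν := by
    linarith [Real.log_nonneg (by simp : (1 : ℝ) ≤ n + 1)]
  have hsub : {ω | ¬ IsPseudorandom (graphOf ω) U r m ν} ⊆
      {ω | ¬ HasCommonNeighbors (graphOf ω) U r (r * (r * (4 * r * (2 * ν ^ 3))) + ν ^ 3)} ∪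
        {ω | ¬ BipartiteHoleFree (graphOf ω) m} ∪
        {ω | ¬ IsLocallySparse (graphOf ω) m ν (ν ^ 3)} := by
    intro ω hω
    contrapose! hω
    simp only [Set.mem_union, Set.mem_ofPred_eq, not_or, not_not] at hω ⊢
    exact ⟨hω.1.1, hω.1.2, hω.2⟩
  calc (gnp n q).real {ω | ¬ IsPseudorandom (graphOf ω) U r m ν}
      ≤ Real.exp (-Real.log (n + 1)) + Real.exp (-Real.log (n + 1)) +
          Real.exp (-Real.log (n + 1)) := by
        refine (measureReal_mono hsub (measure_ne_top _ _)).trans <|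
          (measureReal_union_le _ _).trans <|
            add_le_add ((measureReal_union_le _ _).trans <| add_le_add ?_ ?_) ?_
        · exact gnp_real_not_hasCommonNeighbors_le_exp h0.le h1 hn hU hν hlog1 hq
        · exact gnp_real_not_bipartiteHoleFree_le_exp h0.le h1 hm hlog (le_mul_natCeil_div h0 ν)
        · exact gnp_real_not_isLocallySparse_le_exp h0.le h1 (by omega) hlog
            (mul_natCeil_div_le h0 h1 ν)
    _ = 3 / (n + 1) := by
        rw [Real.exp_neg, Real.exp_log (by positivity)]
        ring

theorem two_mul_natCeil_div_le_pow {k : ℕ} (h0 : 0 < q) (h1 : q ≤ 1) (hν : 2 ≤ ν)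
    (hk : 1 / q ≤ (ν : ℝ) ^ k) : 2 * ⌈ν / q⌉₊ ≤ ν ^ (k + 3) := by
  have hν' : (2 : ℝ) ≤ ν := by exact_mod_cast hν
  have hdiv : 1 ≤ ν / q := by
    rw [le_div_iff₀ h0]
    linarith
  have hcast : (2 * ⌈ν / q⌉₊ : ℝ) ≤ ν ^ (k + 3) := by
    calc (2 * ⌈ν / q⌉₊ : ℝ) ≤ 2 * (ν / q + 1) := by
          gcongr
          exact (Nat.ceil_lt_add_one (by positivity)).le
      _ ≤ 2 ^ 2 * (ν * (1 / q)) := by rw [mul_one_div]; linarith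
      _ ≤ ν ^ 2 * (ν * ν ^ k) := by gcongr
      _ = ν ^ (k + 3) := by ring
  exact_mod_cast hcast

theorem IsPseudorandom.exists_isMonoCycle_cover_of_card_le_div {V : Type*}
    {G : SimpleGraph V} {U W Q : Finset V} {k : ℕ} {K : ℝ}
    (h : IsPseudorandom G U r ⌈ν / q⌉₊ ν) (hr : 2 ≤ r) (h0 : 0 < q) (h1 : q ≤ 1)
    (hk : 1 / q ≤ (ν : ℝ) ^ k) (hkν : 8 * k + 37 ≤ ν) (hK : K ≤ ν) (c : Sym2 V → Fin r)
    (hWU : Disjoint W U) (hQW : Q ⊆ W) (hQ : (#Q : ℝ) ≤ K / q) :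
    ∃ 𝒞 : Finset (Set V), (#𝒞 : ℝ) ≤ 400 * r ^ 4 * Real.log (4 * r ^ 2) ∧
      (∀ S ∈ 𝒞, ∃ i, IsMonoCycle G c i S) ∧ (Q : Set V) ⊆ ⋃₀ (𝒞 : Set (Set V)) := by
  have hν : (0 : ℝ) < ν := by exact_mod_cast (by omega : 0 < ν)
  have hQm : (#Q : ℝ) ≤ ⌈ν / q⌉₊ := hQ.trans ((by gcongr : K / q ≤ ν / q).trans (Nat.le_ceil _))
  exact h.exists_isMonoCycle_cover hr (Nat.ceil_pos.2 (by positivity))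
    (two_mul_natCeil_div_le_pow h0 h1 (by omega) hk) (by omega)
    (hWU.mono_left hQW) (Nat.cast_le.1 hQm) c

theorem half_le_card_compl (hU : (#U : ℝ) ≤ n / 2) : (n : ℝ) / 2 ≤ #Uᶜ := by
  rw [card_compl, Fintype.card_fin, Nat.cast_sub (by simpa using card_le_univ U)]
  linarith

theorem one_div_le_of_rpow_le (hn : 0 < n) (hr : 0 < r) (hε : 0 ≤ ε)
    (hq : (n : ℝ) ^ (-(1 : ℝ) / r + ε) ≤ q) : 1 / q ≤ n := by
  have hn1 : (1 : ℝ) ≤ n := by exact_mod_cast hn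
  have hr1 : (1 : ℝ) / r ≤ 1 := div_le_one_of_le₀ (by exact_mod_cast hr) (by positivity)
  have hinv : (n : ℝ)⁻¹ ≤ q := by
    rw [← Real.rpow_neg_one]
    refine (Real.rpow_le_rpow_of_exponent_le hn1 ?_).trans hq
    rw [neg_div]
    linarith
  rw [one_div]
  exact inv_le_of_inv_le₀ (by positivity) hinv

theorem rpow_mul_le_mul_pow (hn : 0 < n) (hr : 0 < r)
    (hq : (n : ℝ) ^ (-(1 : ℝ) / r + ε) ≤ q) : (n : ℝ) ^ (r * ε) ≤ n * q ^ r := by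
  have hn0 : (0 : ℝ) < n := by exact_mod_cast hn
  calc (n : ℝ) ^ (r * ε) = n * ((n : ℝ) ^ (-(1 : ℝ) / r + ε)) ^ r := by
        rw [← Real.rpow_mul_natCast hn0.le, mul_comm (n : ℝ), ← Real.rpow_add_one hn0.ne']
        congr 1
        field_simp
        ring
    _ ≤ n * q ^ r := by gcongr

theorem floor_rpow_pow_le_mul_pow {k : ℕ} {δ : ℝ} (hn : 0 < n) (hr : 0 < r)
    (hδ : k * δ ≤ r * ε) (hq : (n : ℝ) ^ (-(1 : ℝ) / r + ε) ≤ q) :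
    (⌊(n : ℝ) ^ δ⌋₊ : ℝ) ^ k ≤ n * q ^ r := by
  calc (⌊(n : ℝ) ^ δ⌋₊ : ℝ) ^ k ≤ ((n : ℝ) ^ δ) ^ k := by
        gcongr
        exact Nat.floor_le (by positivity)
    _ = (n : ℝ) ^ (k * δ) := by rw [← Real.rpow_mul_natCast (by positivity), mul_comm]
    _ ≤ (n : ℝ) ^ (r * ε) := Real.rpow_le_rpow_of_exponent_le (by exact_mod_cast hn) hδ
    _ ≤ n * q ^ r := rpow_mul_le_mul_pow hn hr hq

theorem le_floor_rpow_pow_natCeil {δ : ℝ} (hδ : 0 < δ) (hν : 2 ≤ ⌊(n : ℝ) ^ δ⌋₊) :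
    (n : ℝ) ≤ (⌊(n : ℝ) ^ δ⌋₊ : ℝ) ^ ⌈2 / δ⌉₊ := by
  have hν' : (2 : ℝ) ≤ ⌊(n : ℝ) ^ δ⌋₊ := by exact_mod_cast hν
  have hsq : (n : ℝ) ^ δ ≤ (⌊(n : ℝ) ^ δ⌋₊ : ℝ) ^ (2 : ℝ) := by
    rw [Real.rpow_two]
    nlinarith [Nat.lt_floor_add_one ((n : ℝ) ^ δ)]
  calc (n : ℝ) = ((n : ℝ) ^ δ) ^ (1 / δ) := by
        rw [← Real.rpow_mul n.cast_nonneg, mul_one_div_cancel hδ.ne', Real.rpow_one]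
    _ ≤ ((⌊(n : ℝ) ^ δ⌋₊ : ℝ) ^ (2 : ℝ)) ^ (1 / δ) := by gcongr
    _ = (⌊(n : ℝ) ^ δ⌋₊ : ℝ) ^ (2 / δ) := by rw [← Real.rpow_mul (by positivity), mul_one_div]
    _ ≤ (⌊(n : ℝ) ^ δ⌋₊ : ℝ) ^ ⌈2 / δ⌉₊ := by
        rw [← Real.rpow_natCast]
        exact Real.rpow_le_rpow_of_exponent_le (by linarith) (Nat.le_ceil _)

theorem tendsto_floor_natCast_rpow_atTop {δ : ℝ} (hδ : 0 < δ) :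
    Tendsto (fun n : ℕ => ⌊(n : ℝ) ^ δ⌋₊) atTop atTop :=
  tendsto_nat_floor_atTop.comp ((tendsto_rpow_atTop hδ).comp tendsto_natCast_atTop_atTop)

theorem eventually_mul_log_add_one_le_floor_rpow {C δ : ℝ} (hC : 0 ≤ C) (hδ : 0 < δ) :
    ∀ᶠ n : ℕ in atTop, C * Real.log (n + 1) ≤ ⌊(n : ℝ) ^ δ⌋₊ := by
  have hlittle : (fun x : ℝ => C * 2 * Real.log x + 1) =o[atTop] fun x => x ^ δ :=
    ((isLittleO_log_rpow_atTop hδ).const_mul_left _).add <|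
      Asymptotics.isLittleO_const_left.2 <| .inr <|
        tendsto_norm_atTop_atTop.comp (tendsto_rpow_atTop hδ)
  filter_upwards [tendsto_natCast_atTop_atTop.eventually (hlittle.bound one_pos),
    eventually_ge_atTop 2] with n hn hn2
  have hn2' : (2 : ℝ) ≤ n := by exact_mod_cast hn2
  have hlog : Real.log (n + 1) ≤ 2 * Real.log n := by
    rw [← Nat.cast_two, ← Real.log_pow]
    exact Real.log_le_log (by positivity) (by nlinarith)
  rw [one_mul, Real.norm_of_nonneg (by positivity : 0 ≤ (n : ℝ) ^ δ)] at hn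
  calc C * Real.log (n + 1) ≤ C * (2 * Real.log n) := by gcongr
    _ ≤ (n : ℝ) ^ δ - 1 := by linarith [(le_abs_self _).trans hn]
    _ ≤ ⌊(n : ℝ) ^ δ⌋₊ := by linarith [Nat.lt_floor_add_one ((n : ℝ) ^ δ)]

theorem tendsto_measure_one_of_real_not_le {Ω : ℕ → Type*} [∀ n, MeasurableSpace (Ω n)]
    {μ : ∀ n, Measure (Ω n)} (hμ : ∀ n, IsProbabilityMeasure (μ n)) {A : ∀ n, Set (Ω n)}
    (hA : ∀ n, MeasurableSet (A n)) {P : ∀ n, Ω n → Prop} {b : ℕ → ℝ}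
    (hb : Tendsto b atTop (nhds 0))
    (hP : ∀ᶠ n in atTop, (∀ ω, P n ω → ω ∈ A n) ∧ (μ n).real {ω | ¬ P n ω} ≤ b n) :
    Tendsto (fun n => μ n (A n)) atTop (nhds 1) := by
  have hcompl : Tendsto (fun n => (μ n).real (A n)ᶜ) atTop (nhds 0) := by
    refine squeeze_zero' (.of_forall fun n => measureReal_nonneg) (hP.mono fun n hn => ?_) hb
    have hsub : (A n)ᶜ ⊆ {ω | ¬ P n ω} := fun ω => mt (hn.1 ω)
    exact (measureReal_mono hsub (measure_ne_top _ _)).trans hn.2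
  have hreal : Tendsto (fun n => (μ n).real (A n)) atTop (nhds 1) := by
    simpa [probReal_compl_eq_one_sub (hA _)] using hcompl.const_sub 1
  simpa [ofReal_measureReal] using ENNReal.tendsto_ofReal hreal

end Parameters

end MonochromaticCycleCovers

/-- Let `r ≥ 2` and `ε, K > 0` be constants, `W = W(n) ⊆ [n]` fixed sets of at
most `n/2` vertices, and `p = p(n) ≥ n^{-1/r+ε}`. Then w.h.p. in every `r`-coloring of the edges
of `G ~ G(n,p)`, every subset `Q ⊆ W` of size at most `K/p` can be covered by
`400 r^4 log(4r^2)` monochromatic cycles. -/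
theorem stmt2 (r : ℕ) (hr : 2 ≤ r) (ε K : ℝ) (hε : 0 < ε) (hK : 0 < K)
    (W : (n : ℕ) → Finset (Fin n)) (hW : ∀ n : ℕ, ((W n).card : ℝ) ≤ (n : ℝ) / 2)
    (p : ℕ → ℝ) (hp0 : ∀ n, 0 ≤ p n) (hp1 : ∀ n, p n ≤ 1)
    (hplb : ∀ n : ℕ, p n ≥ (n : ℝ) ^ (-(1 : ℝ) / r + ε)) :
    Tendsto (fun n => gnp n (p n)
      {ω | ∀ c : Sym2 (Fin n) → Fin r,
        ∀ Q : Finset (Fin n), Q ⊆ W n → ((Q.card : ℝ) ≤ K / p n) →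
          ∃ 𝒞 : Finset (Set (Fin n)),
            (𝒞.card : ℝ) ≤ 400 * r ^ 4 * Real.log (4 * r ^ 2) ∧
            (∀ S ∈ 𝒞, ∃ i, IsMonoCycle (graphOf ω) c i S) ∧
            (Q : Set (Fin n)) ⊆ ⋃₀ (𝒞 : Set (Set (Fin n)))})
      atTop (nhds 1) := by
  have hr2 : (2 : ℝ) ≤ r := by exact_mod_cast hr
  have hδ : 0 < ε / 10 := by positivity
  let ν (n : ℕ) : ℕ := ⌊(n : ℝ) ^ (ε / 10)⌋₊
  have hν : Tendsto ν atTop atTop := tendsto_floor_natCast_rpow_atTop hδ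
  refine tendsto_measure_one_of_real_not_le
    (P := fun n ω => IsPseudorandom (graphOf ω) (W n)ᶜ r ⌈ν n / p n⌉₊ (ν n))
    (b := fun n => 3 / (n + 1)) (fun n => isProbabilityMeasure_gnp (hp0 n) (hp1 n))
    (fun _ => (Set.toFinite _).measurableSet)
    ((tendsto_natCast_atTop_atTop.atTop_add tendsto_const_nhds).const_div_atTop 3) ?_
  filter_upwards [eventually_ge_atTop (4 * r),
    eventually_mul_log_add_one_le_floor_rpow (C := 16) (by norm_num) hδ,
    hν.eventually_ge_atTop (8 * (8 * r ^ 3 + r + 2)), hν.eventually_ge_atTop ⌈K⌉₊,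
    hν.eventually_ge_atTop (8 * ⌈2 / (ε / 10)⌉₊ + 37)] with n hn hlog hνr hνK hνk
  have hn0 : 0 < n := by omega
  have hp : 0 < p n := (Real.rpow_pos_of_pos (by exact_mod_cast hn0) _).trans_le (hplb n)
  have hpow : (ν n : ℝ) ^ 4 ≤ n * p n ^ r :=
    floor_rpow_pow_le_mul_pow hn0 (by omega) (by norm_num; nlinarith) (hplb n)
  have hinv : 1 / p n ≤ (ν n : ℝ) ^ ⌈2 / (ε / 10)⌉₊ :=
    (one_div_le_of_rpow_le hn0 (by omega) hε.le (hplb n)).trans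
      (le_floor_rpow_pow_natCeil hδ (by omega : 2 ≤ ν n))
  exact ⟨fun ω hω c Q hQW hQ => hω.exists_isMonoCycle_cover_of_card_le_div hr hp (hp1 n) hinv hνk
      (Nat.le_of_ceil_le hνK) c disjoint_compl_right hQW hQ,
    gnp_real_not_isPseudorandom_le hp (hp1 n) hn (half_le_card_compl (hW n)) hνr hlog hpow⟩
end

section
/- Let G be a graph with at least m ≥ 1 vertices. Then there is a (possibly empty) path P in G and subsets D, U ⊆ V(G) such that |D| = m, there are no edges of G between D and U, and V(G) is the disjoint union of D, V(P) and U. -/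
/-!
Run depth-first search: keep the explored set `D` and a path, the stack, whose top is its head, all
other vertices being unvisited. There is never an edge from `D` to an unvisited vertex. With `D`
fixed, take the stack as long as possible: its top then has no unvisited neighbour, for otherwise
the stack could grow, so the top can be moved to `D`. Thus `D` grows by one vertex at a time and
takes every cardinality from `0` to `|V|`.
-/

section DepthFirstSearch

variable {α : Type*} {r : α → α → Prop} {D : Set α} {a : α} {l : List α}

/-- A state of depth-first search along the arcs of `r`: `D` is the set of explored vertices and `l`
the stack, with its top as the head, so that arcs point from each entry to the preceding one. The
unvisited vertices are not stored: they are those outside both `D` and `l`. -/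
structure IsDFSState (r : α → α → Prop) (D : Set α) (l : List α) : Prop where
  nodup : l.Nodup
  isChain : l.IsChain (flip r)
  notMem_of_mem : ∀ d ∈ D, d ∉ l
  not_rel : ∀ d ∈ D, ∀ u ∉ D, u ∉ l → ¬ r d u

namespace IsDFSState

theorem empty (r : α → α → Prop) : IsDFSState r ∅ [] where
  nodup := .nil
  isChain := .nil
  notMem_of_mem := by simp
  not_rel := by simp

theorem push (h : IsDFSState r D l) (haD : a ∉ D) (hal : a ∉ l)
    (hchain : (a :: l).IsChain (flip r)) : IsDFSState r D (a :: l) where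
  nodup := h.nodup.cons hal
  isChain := hchain
  notMem_of_mem d hd := List.not_mem_cons_of_ne_of_not_mem
    (ne_of_mem_of_not_mem hd haD) (h.notMem_of_mem d hd)
  not_rel d hd u huD hul := h.not_rel d hd u huD (List.not_mem_of_not_mem_cons hul)

theorem pop (h : IsDFSState r D (a :: l)) (ha : ∀ u ∉ D, u ∉ a :: l → ¬ r a u) :
    IsDFSState r (insert a D) l where
  nodup := h.nodup.of_cons
  isChain := h.isChain.of_cons
  notMem_of_mem := Set.forall_mem_insert.2
    ⟨h.nodup.notMem, fun d hd ↦ List.not_mem_of_not_mem_cons (h.notMem_of_mem d hd)⟩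
  not_rel := by
    have unvisited {u : α} (huD : u ∉ insert a D) (hul : u ∉ l) : u ∉ D ∧ u ∉ a :: l := by
      grind
    refine Set.forall_mem_insert.2 ⟨fun u huD hul ↦ ?_, fun d hd u huD hul ↦ ?_⟩
    · exact ha u (unvisited huD hul).1 (unvisited huD hul).2
    · exact h.not_rel d hd u (unvisited huD hul).1 (unvisited huD hul).2

variable [Finite α]

theorem exists_maximalFor_length (h : IsDFSState r D l) :
    ∃ l', MaximalFor (IsDFSState r D) List.length l' := by
  have bdd : BddAbove (List.length '' {l' | IsDFSState r D l'}) :=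
    ⟨Nat.card α, Set.forall_mem_image.2 fun _ hl' ↦ hl'.nodup.length_le_natCard⟩
  exact Set.Finite.exists_maximalFor' _ _ bdd.finite ⟨l, h⟩

theorem exists_insert (h : IsDFSState r D l) (hD : D ≠ Set.univ) :
    ∃ a ∉ D, ∃ l', IsDFSState r (insert a D) l' := by
  obtain ⟨l', hl', hmax⟩ := h.exists_maximalFor_length
  have not_push (u : α) : ¬ IsDFSState r D (u :: l') := fun hu ↦
    (Nat.lt_succ_self _).not_ge (hmax hu (Nat.le_succ _))
  cases l' with
  | nil =>
    obtain ⟨u, hu⟩ := (Set.ne_univ_iff_exists_notMem D).1 hD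
    exact absurd (hl'.push hu List.not_mem_nil (.singleton u)) (not_push u)
  | cons a t =>
    refine ⟨a, fun ha ↦ hl'.notMem_of_mem a ha List.mem_cons_self, t, hl'.pop ?_⟩
    exact fun u huD hul hau ↦ not_push u (hl'.push huD hul (.cons_cons hau hl'.isChain))

theorem exists_ncard_eq (r : α → α → Prop) {m : ℕ} (hm : m ≤ Nat.card α) :
    ∃ D l, IsDFSState r D l ∧ D.ncard = m := by
  induction m with
  | zero => exact ⟨∅, [], empty r, Set.ncard_empty α⟩
  | succ k ih =>
    obtain ⟨D, l, h, hcard⟩ := ih (Nat.le_of_succ_le hm)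
    have hD : D ≠ Set.univ := by
      rintro rfl
      rw [Set.ncard_univ] at hcard
      omega
    obtain ⟨a, ha, l', h'⟩ := h.exists_insert hD
    exact ⟨insert a D, l', h', by rw [Set.ncard_insert_of_notMem ha, hcard]⟩

end IsDFSState

end DepthFirstSearch

theorem setOf_mem_eq_empty_or_exists_isPath {V : Type*} {G : SimpleGraph V} {l : List V}
    (hchain : l.IsChain G.Adj) (hnodup : l.Nodup) :
    {x | x ∈ l} = ∅ ∨
      ∃ (a b : V) (w : G.Walk a b), w.IsPath ∧ {x | x ∈ l} = {x | x ∈ w.support} := by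
  obtain rfl | hne := eq_or_ne l []
  · simp
  · have hsupport := SimpleGraph.Walk.support_ofSupport hne hchain
    exact .inr ⟨_, _, .ofSupport l hne hchain, .mk' (hsupport.symm ▸ hnodup), by rw [hsupport]⟩

theorem stmt4_general {α : Type*} [Finite α] (r : α → α → Prop) {m : ℕ} (hm : m ≤ Nat.card α) :
    ∃ (D U : Set α) (l : List α), l.IsChain r ∧ l.Nodup ∧
      D.ncard = m ∧
      (∀ d ∈ D, ∀ u ∈ U, ¬ r d u) ∧
      Disjoint D {x | x ∈ l} ∧ Disjoint D U ∧ Disjoint {x | x ∈ l} U ∧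
      D ∪ {x | x ∈ l} ∪ U = Set.univ := by
  obtain ⟨D, l, h, hcard⟩ := IsDFSState.exists_ncard_eq r hm
  have hrev : {x | x ∈ l.reverse} = {x | x ∈ l} := by simp only [List.mem_reverse]
  have hU : Disjoint (D ∪ {x | x ∈ l}) (D ∪ {x | x ∈ l})ᶜ := disjoint_compl_right
  refine ⟨D, (D ∪ {x | x ∈ l})ᶜ, l.reverse, List.isChain_reverse.2 h.isChain,
    List.nodup_reverse.2 h.nodup, hcard, ?_, ?_⟩
  · exact fun d hd u hu ↦ h.not_rel d hd u (fun huD ↦ hu (.inl huD)) (fun hul ↦ hu (.inr hul))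
  · rw [hrev]
    exact ⟨Set.disjoint_left.2 h.notMem_of_mem, hU.mono_left Set.subset_union_left,
      hU.mono_left Set.subset_union_right, Set.union_compl_self _⟩

/-- Let `G` be a graph with at least `m ≥ 1` vertices. Then there is a
(possibly empty) path `P` in `G` and subsets `D, U ⊆ V(G)` such that `|D| = m`, there are no
edges of `G` between `D` and `U`, and `V(G)` is the disjoint union of `D`, `V(P)` and `U`. -/
theorem stmt4 {V : Type*} [Fintype V] (m : ℕ) (hm : 1 ≤ m) (G : SimpleGraph V)
    (hcard : m ≤ Fintype.card V) :
    ∃ D P U : Set V,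
      (P = ∅ ∨ ∃ (a b : V) (w : G.Walk a b), w.IsPath ∧ P = {x | x ∈ w.support}) ∧
      D.ncard = m ∧
      (∀ d ∈ D, ∀ u ∈ U, ¬ G.Adj d u) ∧
      Disjoint D P ∧ Disjoint D U ∧ Disjoint P U ∧
      D ∪ P ∪ U = Set.univ := by
  obtain ⟨D, U, l, hchain, hnodup, h⟩ :=
    stmt4_general G.Adj (hcard.trans_eq Nat.card_eq_fintype_card.symm)
  exact ⟨D, {x | x ∈ l}, U, setOf_mem_eq_empty_or_exists_isPath hchain hnodup, h⟩
end
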